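/- arXiv:1712.06268 — 3 statements merged into one kernel-verified Lean document; each statement's English description precedes it below -/
import Mathlib

section
/- The set Σ ∪ T₁ ⊂ ℝⁿ × (0,∞) is the union of an at most countable, pairwise disjoint family of nonempty sets, each of which is either connected or almost connected (in the subspace metric of ℝⁿ⁺¹). -/
open scoped InnerProductSpace Topology ENNReal
open Filter

noncomputable section

/-- Euclidean space `ℝⁿ`. -/
abbrev Euc (n : ℕ) := EuclideanSpace ℝ (Fin n)

/-- Hopf–Lax solution of the Eikonal equation `uₜ + |∇u| = 0` with initial data `g`:
`u(x,t) = min {g(y) : |y - x| ≤ t}`. -/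
def HLu {n : ℕ} (g : Euc n → ℝ) (x : Euc n) (t : ℝ) : ℝ :=
  sInf (g '' Metric.closedBall x t)

/-- The set of minimizers `L(x,t) = {y : |y - x| ≤ t ∧ g y = u(x,t)}`. -/
def HLL {n : ℕ} (g : Euc n → ℝ) (x : Euc n) (t : ℝ) : Set (Euc n) :=
  {y | ‖y - x‖ ≤ t ∧ g y = HLu g x t}

/-- The characteristic from `y₀`: `X(y₀,t) = y₀ + t • Dg(y₀)/|Dg(y₀)|`. -/
def charX {n : ℕ} (Dg : Euc n → Euc n) (y₀ : Euc n) (t : ℝ) : Euc n :=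
  y₀ + t • (‖Dg y₀‖⁻¹ • Dg y₀)

/-- First termination time `t̄ₛ(y₀) = sup {t > 0 : L(X(y₀,t),t) = {y₀}}`, in `[0,∞]`
(`sup ∅ = 0`). -/
def tbar {n : ℕ} (g : Euc n → ℝ) (Dg : Euc n → Euc n) (y₀ : Euc n) : ℝ≥0∞ :=
  sSup (ENNReal.ofReal '' {t : ℝ | 0 < t ∧ HLL g (charX Dg y₀ t) t = {y₀}})

/-- Second termination time `tₛ(y₀) = inf {t > 0 : y₀ ∉ L(X(y₀,t),t)}`, in `[0,∞]`
(`inf ∅ = ∞`). -/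
def tsnd {n : ℕ} (g : Euc n → ℝ) (Dg : Euc n → Euc n) (y₀ : Euc n) : ℝ≥0∞ :=
  sInf (ENNReal.ofReal '' {t : ℝ | 0 < t ∧ y₀ ∉ HLL g (charX Dg y₀ t) t})

/-- The set `Σ` of points of `ℝⁿ × (0,∞)` at which `u` is not Fréchet differentiable. -/
def SigmaSet {n : ℕ} (g : Euc n → ℝ) : Set (Euc n × ℝ) :=
  {p | 0 < p.2 ∧ ¬ DifferentiableAt ℝ (fun q : Euc n × ℝ => HLu g q.1 q.2) p}

/-- `T(M)`: the set of termination points of characteristics from points with `Dg ≠ 0`. -/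
def TM {n : ℕ} (g : Euc n → ℝ) (Dg : Euc n → Euc n) : Set (Euc n × ℝ) :=
  {p | ∃ y₀ : Euc n, ∃ t : ℝ, Dg y₀ ≠ 0 ∧ tbar g Dg y₀ < ⊤ ∧ 0 < t ∧
    tbar g Dg y₀ ≤ ENNReal.ofReal t ∧ ENNReal.ofReal t ≤ tsnd g Dg y₀ ∧
    p = (charX Dg y₀ t, t)}

/-- `T₁`: the points of `T(M)` having a unique minimizer. -/
def T1 {n : ℕ} (g : Euc n → ℝ) (Dg : Euc n → Euc n) : Set (Euc n × ℝ) :=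
  {p ∈ TM g Dg | ∃ y : Euc n, HLL g p.1 p.2 = {y}}

/-- A set `C` in a metric space is almost connected if for any decomposition `C = A ∪ B`
into two disjoint nonempty subsets, each closed in the subspace topology of `C`,
the infimum of distances between points of `A` and points of `B` is `0`. -/
def AlmostConnected {α : Type*} [MetricSpace α] (C : Set α) : Prop :=
  ∀ A B : Set α, A ⊆ C → B ⊆ C → A.Nonempty → B.Nonempty → Disjoint A B → A ∪ B = C →
    closure A ∩ C ⊆ A → closure B ∩ C ⊆ B → sInf (Set.image2 dist A B) = 0

/-!
`Σ ∪ T₁` is `T(M)`, because by Danskin's theorem `u` is differentiable at `(x, t)` as soon as `Dg`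
is constant on the minimizers, while several minimizers, one of them noncritical, destroy
differentiability.

The characteristic from a noncritical `y` terminates when the balls `B(X(y, t), t)`, which exhaust
the half-space ahead of `y`, reach a point of height at most `g y`; hence there is a level `c ≤ g y`
attained or undercut ahead of `y`, and `c` can be taken rational or a local minimum value of `g`.
For fixed `c` the points `y` with this property form a relatively open subset of `{c ≤ g}`, with
countably many components since `Dg ≠ 0` there.

Over such a component `N` the termination points are almost connected. Otherwise they split into two
parts at positive distance, and some `y ∈ N` is a limit of feet of both parts. The two limiting
termination times then bound a piece of the characteristic from `y`. It is bridged by termination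
points: if characteristics from `y' → y` are already dead at time `t`, the point of
`{x | g y' ≤ u(x, t)}` closest to `y'` has several minimizers, and it tends to `X(y, t)`.

Finally, the union of countably many almost connected sets is the disjoint union of at most
countably many maximal almost connected subsets.
-/

/-! ### Almost connected sets -/

section AlmostConnected

variable {α : Type*} [MetricSpace α] {C D S A B : Set α} {p q : α} {ε : ℝ}

theorem disjoint_closure_of_forall_le_dist (hε : 0 < ε) (hAB : ∀ a ∈ A, ∀ b ∈ B, ε ≤ dist a b) :
    Disjoint (closure A) (closure B) := by
  rw [Set.disjoint_left]
  intro x hxA hxB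
  obtain ⟨a, ha, hxa⟩ := Metric.mem_closure_iff.1 hxA (ε / 2) (half_pos hε)
  obtain ⟨b, hb, hxb⟩ := Metric.mem_closure_iff.1 hxB (ε / 2) (half_pos hε)
  linarith [hAB a ha b hb, dist_triangle_left a b x]

theorem almostConnected_iff_forall_exists_dist_lt :
    AlmostConnected C ↔ ∀ A B : Set α, A.Nonempty → B.Nonempty → A ∪ B = C →
      ∀ ε > 0, ∃ a ∈ A, ∃ b ∈ B, dist a b < ε := by
  constructor
  · rintro hC A B hA hB rfl ε hε
    by_contra! hsep
    have hdisj := disjoint_closure_of_forall_le_dist hε hsep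
    have hinf := hC A B Set.subset_union_left Set.subset_union_right hA hB
      (hdisj.mono subset_closure subset_closure) rfl
      (fun x hx => hx.2.resolve_right fun hxB => hdisj.le_bot ⟨hx.1, subset_closure hxB⟩)
      (fun x hx => hx.2.resolve_left fun hxA => hdisj.le_bot ⟨subset_closure hxA, hx.1⟩)
    have hle : ε ≤ sInf (Set.image2 dist A B) :=
      le_csInf (hA.image2 hB) (Set.forall_mem_image2.2 hsep)
    linarith
  · intro hC A B _ _ hA hB _ hAB _ _
    have hnonneg : ∀ r ∈ Set.image2 dist A B, 0 ≤ r :=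
      Set.forall_mem_image2.2 fun _ _ _ _ => dist_nonneg
    refine le_antisymm (le_of_forall_pos_lt_add fun ε hε => ?_) (Real.sInf_nonneg hnonneg)
    obtain ⟨a, ha, b, hb, hab⟩ := hC A B hA hB hAB ε hε
    rw [zero_add]
    exact (csInf_le ⟨0, hnonneg⟩ (Set.mem_image2_of_mem ha hb)).trans_lt hab

theorem almostConnected_singleton (p : α) : AlmostConnected {p} := by
  rw [almostConnected_iff_forall_exists_dist_lt]
  rintro A B ⟨a, ha⟩ ⟨b, hb⟩ hAB ε hε
  have hap : a = p := hAB.subset (Or.inl ha)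
  have hbp : b = p := hAB.subset (Or.inr hb)
  exact ⟨a, ha, b, hb, by rwa [hap, hbp, dist_self]⟩

theorem almostConnected_sUnion {F : Set (Set α)} (hF : ∀ C ∈ F, AlmostConnected C)
    (hp : ∀ C ∈ F, p ∈ C) : AlmostConnected (⋃₀ F) := by
  have close_of_mem_left : ∀ A B : Set α, p ∈ A → B.Nonempty → A ∪ B = ⋃₀ F →
      ∀ ε > 0, ∃ a ∈ A, ∃ b ∈ B, dist a b < ε := by
    rintro A B hpA ⟨b, hb⟩ hAB ε hε
    obtain ⟨C, hC, hbC⟩ := hAB.subset (Or.inr hb)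
    have hcover : A ∩ C ∪ B ∩ C = C := by
      rw [← Set.union_inter_distrib_right, hAB]
      exact Set.inter_eq_right.2 (Set.subset_sUnion_of_mem hC)
    obtain ⟨a', ha', b', hb', hd⟩ := almostConnected_iff_forall_exists_dist_lt.1 (hF C hC)
      (A ∩ C) (B ∩ C) ⟨p, hpA, hp C hC⟩ ⟨b, hb, hbC⟩ hcover ε hε
    exact ⟨a', ha'.1, b', hb'.1, hd⟩
  rw [almostConnected_iff_forall_exists_dist_lt]
  rintro A B ⟨a, ha⟩ hB hAB ε hε
  obtain ⟨C, hC, -⟩ := hAB.subset (Or.inl ha)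
  rcases hAB.superset ⟨C, hC, hp C hC⟩ with hpA | hpB
  · exact close_of_mem_left A B hpA hB hAB ε hε
  · obtain ⟨b, hb, a, ha, hd⟩ :=
      close_of_mem_left B A hpB ⟨a, ha⟩ ((Set.union_comm B A).trans hAB) ε hε
    exact ⟨a, ha, b, hb, dist_comm a b ▸ hd⟩

theorem AlmostConnected.of_subset_closure (hC : AlmostConnected C) (hDC : D ⊆ C)
    (hCD : C ⊆ closure D) : AlmostConnected D := by
  rw [almostConnected_iff_forall_exists_dist_lt] at hC ⊢
  rintro A B ⟨a₀, ha₀⟩ ⟨b₀, hb₀⟩ rfl ε hε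
  have hcover : C ∩ closure A ∪ C ∩ closure B = C := by
    rw [← Set.inter_union_distrib_left, ← closure_union, Set.inter_eq_left.2 hCD]
  obtain ⟨a, ⟨-, haA⟩, b, ⟨-, hbB⟩, hab⟩ := hC (C ∩ closure A) (C ∩ closure B)
    ⟨a₀, hDC (Or.inl ha₀), subset_closure ha₀⟩ ⟨b₀, hDC (Or.inr hb₀), subset_closure hb₀⟩
    hcover (ε / 3) (by positivity)
  obtain ⟨a₁, ha₁, haa₁⟩ := Metric.mem_closure_iff.1 haA (ε / 3) (by positivity)
  obtain ⟨b₁, hb₁, hbb₁⟩ := Metric.mem_closure_iff.1 hbB (ε / 3) (by positivity)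
  refine ⟨a₁, ha₁, b₁, hb₁, ?_⟩
  linarith [dist_triangle4 a₁ a b b₁, dist_comm a₁ a]

/-- The largest almost connected subset of `S` containing `p`, the analogue of
`connectedComponentIn`; it is empty if `p ∉ S`. -/
def almostComponentIn (S : Set α) (p : α) : Set α :=
  ⋃₀ {C | C ⊆ S ∧ AlmostConnected C ∧ p ∈ C}

theorem almostConnected_almostComponentIn : AlmostConnected (almostComponentIn S p) :=
  almostConnected_sUnion (fun _ hC => hC.2.1) fun _ hC => hC.2.2

theorem almostComponentIn_subset : almostComponentIn S p ⊆ S :=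
  Set.sUnion_subset fun _ hC => hC.1

theorem AlmostConnected.subset_almostComponentIn (hC : AlmostConnected C) (hCS : C ⊆ S)
    (hp : p ∈ C) : C ⊆ almostComponentIn S p :=
  Set.subset_sUnion_of_mem (⟨hCS, hC, hp⟩ : C ∈ {C | C ⊆ S ∧ AlmostConnected C ∧ p ∈ C})

theorem mem_almostComponentIn (hp : p ∈ S) : p ∈ almostComponentIn S p :=
  (almostConnected_singleton p).subset_almostComponentIn (Set.singleton_subset_iff.2 hp) rfl rfl

theorem almostComponentIn_eq (hq : q ∈ almostComponentIn S p) :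
    almostComponentIn S p = almostComponentIn S q := by
  have hpS : p ∈ S := let ⟨_, hC, _⟩ := hq; hC.1 hC.2.2
  have hpq : almostComponentIn S p ⊆ almostComponentIn S q :=
    almostConnected_almostComponentIn.subset_almostComponentIn almostComponentIn_subset hq
  exact hpq.antisymm (almostConnected_almostComponentIn.subset_almostComponentIn
    almostComponentIn_subset (hpq (mem_almostComponentIn hpS)))

theorem countable_almostComponentIn_sUnion {𝒯 : Set (Set α)} (h𝒯 : 𝒯.Countable)
    (hconn : ∀ C ∈ 𝒯, AlmostConnected C) : (almostComponentIn (⋃₀ 𝒯) '' ⋃₀ 𝒯).Countable := by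
  rw [Set.sUnion_eq_biUnion, Set.image_iUnion₂]
  refine h𝒯.biUnion fun C hC => Set.Subsingleton.countable ?_
  rintro _ ⟨p, hp, rfl⟩ _ ⟨q, hq, rfl⟩
  exact almostComponentIn_eq ((hconn C hC).subset_almostComponentIn
    (Set.subset_biUnion_of_mem (u := id) hC) hp hq)

theorem exists_countable_almostConnected_partition {𝒯 : Set (Set α)} (h𝒯 : 𝒯.Countable)
    (hconn : ∀ C ∈ 𝒯, AlmostConnected C) :
    ∃ 𝒮 : Set (Set α), 𝒮.Countable ∧ (∀ C ∈ 𝒮, C.Nonempty) ∧ 𝒮.PairwiseDisjoint id ∧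
      (∀ C ∈ 𝒮, AlmostConnected C) ∧ ⋃₀ 𝒮 = ⋃₀ 𝒯 := by
  refine ⟨almostComponentIn (⋃₀ 𝒯) '' ⋃₀ 𝒯, countable_almostComponentIn_sUnion h𝒯 hconn,
    ?_, ?_, ?_, ?_⟩
  · rintro _ ⟨p, hp, rfl⟩
    exact ⟨p, mem_almostComponentIn hp⟩
  · rintro _ ⟨p, -, rfl⟩ _ ⟨q, -, rfl⟩ hne
    refine Set.disjoint_left.2 fun r hrp hrq => hne ?_
    exact (almostComponentIn_eq hrp).trans (almostComponentIn_eq hrq).symm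
  · rintro _ ⟨p, -, rfl⟩
    exact almostConnected_almostComponentIn
  · refine Set.Subset.antisymm (Set.sUnion_subset ?_) fun p hp =>
      ⟨_, ⟨p, hp, rfl⟩, mem_almostComponentIn hp⟩
    rintro _ ⟨p, -, rfl⟩
    exact almostComponentIn_subset

end AlmostConnected

/-! ### Countability of local minimum values and of connected components -/

section Countability

variable {X : Type*} [TopologicalSpace X] [SecondCountableTopology X]

theorem countable_localMin_values (f : X → ℝ) : {c | ∃ x, IsLocalMin f x ∧ f x = c}.Countable := by
  refine ((TopologicalSpace.countable_countableBasis X).image fun B => sInf (f '' B)).mono ?_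
  rintro _ ⟨x, hx, rfl⟩
  obtain ⟨B, hB, hxB, hmin⟩ := (TopologicalSpace.isBasis_countableBasis X).mem_nhds_iff.1 hx
  have hleast : IsLeast (f '' B) (f x) := ⟨⟨x, hxB, rfl⟩, Set.forall_mem_image.2 hmin⟩
  exact ⟨B, hB, hleast.csInf_eq⟩

theorem countable_connectedComponentIn_of_mem_nhdsWithin {F : Set X}
    (hF : ∀ x ∈ F, connectedComponentIn F x ∈ 𝓝[F] x) :
    (connectedComponentIn F '' F).Countable := by
  obtain ⟨t, -, htc, hcover⟩ := TopologicalSpace.countable_cover_nhdsWithin hF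
  refine (htc.image (connectedComponentIn F)).mono ?_
  rintro _ ⟨x, hx, rfl⟩
  obtain ⟨y, hy, hxy⟩ := Set.mem_iUnion₂.1 (hcover hx)
  exact ⟨y, hy, connectedComponentIn_eq hxy⟩

end Countability

theorem mem_connectedComponentIn_of_joinedIn {X : Type*} [TopologicalSpace X] {F : Set X} {x y : X}
    (h : JoinedIn F x y) : y ∈ connectedComponentIn F x :=
  (isPreconnected_range h.somePath.continuous).subset_connectedComponentIn
    ⟨0, h.somePath.source⟩ (Set.range_subset_iff.2 h.somePath_mem) ⟨1, h.somePath.target⟩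

theorem isPreconnected_subset_left_of_isClosed {X : Type*} [TopologicalSpace X] {s u v : Set X}
    (hs : IsPreconnected s) (hu : IsClosed u) (hv : IsClosed v) (huv : Disjoint u v)
    (hsuv : s ⊆ u ∪ v) (hsu : (s ∩ u).Nonempty) : s ⊆ u := by
  refine (isPreconnected_iff_subset_of_disjoint_closed.1 hs u v hu hv hsuv
    (by rw [huv.inter_eq, Set.inter_empty])).resolve_right fun hsv => ?_
  obtain ⟨x, hxs, hxu⟩ := hsu
  exact Set.disjoint_left.1 huv hxu (hsv hxs)

theorem exists_mem_closure_of_mem_closure_image_fst {X Y : Type*} [TopologicalSpace X]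
    [TopologicalSpace Y] {K : Set Y} (hK : IsCompact K) {Q : Set (X × Y)}
    (hQ : ∀ q ∈ Q, q.2 ∈ K) {x : X} (hx : x ∈ closure (Prod.fst '' Q)) :
    ∃ y ∈ K, (x, y) ∈ closure Q := by
  by_contra! hne
  have hempty : ∀ᶠ x' in 𝓝 x, ∀ y ∈ K, (x', y) ∉ Q :=
    hK.eventually_forall_of_forall_eventually fun y hy =>
      (not_frequently.1 (mt mem_closure_iff_frequently.2 (hne y hy)))
  obtain ⟨_, ⟨q, hq, rfl⟩, hnot⟩ := ((mem_closure_iff_frequently.1 hx).and_eventually hempty).exists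
  exact hnot q.2 (hQ q hq) hq

/-! ### Danskin's theorem -/

section Danskin

theorem eventually_forall_active_of_isCompact {Y V : Type*} [TopologicalSpace Y]
    [TopologicalSpace V] {K : Set V} (hK : IsCompact K) {f : Y → V → ℝ} {φ : Y → ℝ} {y : Y}
    (hf : ∀ v ∈ K, ContinuousAt (Function.uncurry f) (y, v)) (hφ : ContinuousAt φ y)
    {Q : Y → V → Prop} (hQ : ∀ v ∈ K, f y v = φ y → ∀ᶠ z in 𝓝 (y, v), Q z.1 z.2) :
    ∀ᶠ y' in 𝓝 y, ∀ v ∈ K, f y' v = φ y' → Q y' v := by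
  refine hK.eventually_forall_of_forall_eventually fun v hv => ?_
  by_cases hactive : f y v = φ y
  · exact (hQ v hv hactive).mono fun _ hz _ => hz
  · have hφ' : ContinuousAt (fun z : Y × V => φ z.1) (y, v) :=
      ContinuousAt.comp (f := Prod.fst) hφ continuousAt_fst
    filter_upwards [((hf v hv).sub hφ').eventually_ne (sub_ne_zero.2 hactive)] with z hz h
    exact absurd (sub_eq_zero.2 h) hz

variable {E V : Type*} [NormedAddCommGroup E] [NormedSpace ℝ E] {p : E}

theorem fderiv_eq_of_eventually_le {φ f : E → ℝ} {φ' f' : E →L[ℝ] ℝ} (hφ : HasFDerivAt φ φ' p)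
    (hf : HasFDerivAt f f' p) (hle : ∀ᶠ q in 𝓝 p, φ q ≤ f q) (heq : φ p = f p) : φ' = f' := by
  have hmax : IsLocalMax (φ - f) p := by
    filter_upwards [hle] with q hq
    simp only [Pi.sub_apply, heq, sub_self]
    linarith
  exact sub_eq_zero.1 (hmax.hasFDerivAt_eq_zero (hφ.sub hf))

theorem hasFDerivAt_min_of_forall_active [TopologicalSpace V] {K : Set V} (hK : IsCompact K)
    {f : E → V → ℝ} {f' : E → V → E →L[ℝ] ℝ} {φ : E → ℝ} {L : E →L[ℝ] ℝ}
    (hf : ∀ q v, HasFDerivAt (f · v) (f' q v) q) (hfc : Continuous (Function.uncurry f))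
    (hf'c : Continuous (Function.uncurry f')) (hφ : ContinuousAt φ p)
    (hmin : ∀ᶠ q in 𝓝 p, IsLeast (f q '' K) (φ q))
    (hL : ∀ v ∈ K, f p v = φ p → f' p v = L) : HasFDerivAt φ L p := by
  rw [hasFDerivAt_iff_isLittleO, Asymptotics.isLittleO_iff]
  intro ε hε
  -- Two copies of the parameter: an active `v` at `q.1` has slope near `L` at every nearby `q.2`.
  have slope_near : ∀ᶠ q : E × E in 𝓝 (p, p), ∀ v ∈ K, f q.1 v = φ q.1 → ‖f' q.2 v - L‖ < ε := by
    refine eventually_forall_active_of_isCompact hK (f := fun q : E × E => f q.1)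
      (φ := fun q => φ q.1) (Q := fun q v => ‖f' q.2 v - L‖ < ε) (fun v _ => ?_)
      (ContinuousAt.comp (f := Prod.fst) hφ continuousAt_fst) fun v hv hactive => ?_
    · exact (hfc.comp (by fun_prop : Continuous fun z : (E × E) × V => (z.1.1, z.2))).continuousAt
    · have hcont : Continuous fun z : (E × E) × V => ‖f' z.1.2 z.2 - L‖ :=
        ((hf'c.comp (by fun_prop : Continuous fun z : (E × E) × V => (z.1.2, z.2))).sub
          continuous_const).norm
      exact hcont.continuousAt.eventually_lt_const (by simpa [hL v hv hactive] using hε)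
  obtain ⟨r, hr, hslope⟩ := Metric.eventually_nhds_iff_ball.1 slope_near
  have taylor : ∀ q ∈ Metric.ball p r, ∀ q₁ ∈ Metric.ball p r, ∀ v ∈ K, f q₁ v = φ q₁ →
      |f q v - f p v - L (q - p)| ≤ ε * ‖q - p‖ := fun q hq q₁ hq₁ v hv hactive =>
    (convex_ball p r).norm_image_sub_le_of_norm_hasFDerivWithin_le'
      (fun x _ => (hf x v).hasFDerivWithinAt)
      (fun x hx => (hslope (q₁, x) (by rw [← ball_prod_same]; exact ⟨hq₁, hx⟩) v hv hactive).le)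
      (Metric.mem_ball_self hr) hq
  obtain ⟨⟨v₀, hv₀, hv₀p⟩, hmin_p⟩ := hmin.self_of_nhds
  filter_upwards [hmin, Metric.ball_mem_nhds p hr] with q hmin_q hq
  obtain ⟨v, hv, hvq⟩ := hmin_q.1
  have hlower := taylor q hq q hq v hv hvq
  have hupper := taylor q hq p (Metric.mem_ball_self hr) v₀ hv₀ hv₀p
  have hφq : φ q ≤ f q v₀ := hmin_q.2 ⟨v₀, hv₀, rfl⟩
  have hφp : φ p ≤ f p v := hmin_p ⟨v, hv, rfl⟩
  rw [abs_le] at hlower hupper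
  rw [Real.norm_eq_abs, abs_le]
  constructor <;> linarith

end Danskin

/-! ### Balls touching a point -/

open NormedSpace (normalize norm_smul_normalize norm_normalize_eq_one_iff)

section TangentBall

open Metric

theorem image_add_smul_unitClosedBall {E : Type*} [NormedAddCommGroup E] [NormedSpace ℝ E] {t : ℝ}
    (ht : 0 ≤ t) (x : E) : (fun v => x + t • v) '' closedBall (0 : E) 1 = closedBall x t := by
  rw [← affinity_unitClosedBall ht x, ← Set.image_smul, ← Set.image_vadd, Set.image_image]
  rfl

theorem closedBall_add_smul_subset {E : Type*} [NormedAddCommGroup E] [NormedSpace ℝ E] {y v : E}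
    (hv : ‖v‖ = 1) {s t : ℝ} (hst : s ≤ t) :
    closedBall (y + s • v) s ⊆ closedBall (y + t • v) t := by
  refine closedBall_subset_closedBall' ?_
  rw [dist_add_left, dist_eq_norm, ← sub_smul, norm_smul, hv, mul_one, Real.norm_eq_abs,
    abs_sub_comm, abs_of_nonneg (sub_nonneg.2 hst)]
  linarith

theorem eventually_closedBall_add_smul_subset {E : Type*} [NormedAddCommGroup E] [NormedSpace ℝ E]
    {y : E} {U : Set E} (hU : U ∈ 𝓝 y) (v : E) :
    ∀ᶠ s : ℝ in 𝓝 0, closedBall (y + (2 * s) • v) s ⊆ U := by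
  have hradius : Tendsto (fun s : ℝ => s + ‖(2 * s) • v‖) (𝓝 0) (𝓝 0) := by
    have : Continuous fun s : ℝ => s + ‖(2 * s) • v‖ := by fun_prop
    simpa using this.tendsto 0
  filter_upwards [hradius.eventually
    ((tendsto_closedBall_smallSets y).eventually (eventually_smallSets_subset.2 hU))] with s hs
  refine (closedBall_subset_closedBall' ?_).trans hs
  rw [dist_self_add_left]

variable {E : Type*} [NormedAddCommGroup E] [InnerProductSpace ℝ E] {x y z v w p q : E} {t : ℝ}

theorem norm_sub_add_smul_sq (hv : ‖v‖ = 1) :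
    ‖z - (y + t • v)‖ ^ 2 = ‖z - y‖ ^ 2 - 2 * t * ⟪v, z - y⟫_ℝ + t ^ 2 := by
  rw [← sub_sub, norm_sub_sq_real, real_inner_smul_right, norm_smul, hv, real_inner_comm, mul_one,
    Real.norm_eq_abs, sq_abs]
  ring

theorem inner_pos_of_mem_closedBall_add_smul (hv : ‖v‖ = 1) (hz : z ∈ closedBall (y + t • v) t)
    (hne : z ≠ y) : 0 < ⟪v, z - y⟫_ℝ := by
  rw [mem_closedBall_iff_norm] at hz
  have ht : 0 ≤ t := (norm_nonneg _).trans hz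
  have hsq : ‖z - (y + t • v)‖ ^ 2 ≤ t ^ 2 := by gcongr
  rw [norm_sub_add_smul_sq hv] at hsq
  have hdist : 0 < ‖z - y‖ ^ 2 := pow_pos (norm_pos_iff.2 (sub_ne_zero.2 hne)) 2
  exact pos_of_mul_pos_right (by linarith : 0 < 2 * t * ⟪v, z - y⟫_ℝ) (by positivity)

theorem exists_mem_ball_add_smul (hv : ‖v‖ = 1) (hz : 0 < ⟪v, z - y⟫_ℝ) :
    ∃ t : ℝ, 0 < t ∧ z ∈ ball (y + t • v) t := by
  set a := ⟪v, z - y⟫_ℝ with ha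
  have ht : 0 < (‖z - y‖ ^ 2 + 1) / (2 * a) := by positivity
  refine ⟨(‖z - y‖ ^ 2 + 1) / (2 * a), ht, ?_⟩
  rw [mem_ball_iff_norm, ← sq_lt_sq₀ (norm_nonneg _) ht.le, norm_sub_add_smul_sq hv, ← ha]
  have hcancel : 2 * ((‖z - y‖ ^ 2 + 1) / (2 * a)) * a = ‖z - y‖ ^ 2 + 1 := by field_simp
  linarith

theorem inner_eq_norm_mul_inner_normalize (p w : E) :
    ⟪p, w⟫_ℝ = ‖p‖ * ⟪normalize p, w⟫_ℝ := by
  rw [← real_inner_smul_left, norm_smul_normalize]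

theorem eq_norm_smul_normalize_of_inner_nonneg (hp : p ≠ 0)
    (hpq : ∀ w, 0 < ⟪p, w⟫_ℝ → 0 ≤ ⟪q, w⟫_ℝ) : q = ‖q‖ • normalize p := by
  have hν : ‖normalize p‖ = 1 := norm_normalize_eq_one_iff.2 hp
  have hle : ⟪normalize p, q⟫_ℝ ≤ ‖q‖ := by simpa [hν] using real_inner_le_norm (normalize p) q
  suffices heq : ⟪normalize p, q⟫_ℝ = ‖q‖ by
    have hparallel := inner_eq_norm_mul_iff_real.1 (by rw [heq, hν, one_mul] :
      ⟪normalize p, q⟫_ℝ = ‖normalize p‖ * ‖q‖)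
    rw [hparallel, hν, one_smul]
  by_contra hne
  have hlt : ⟪normalize p, q⟫_ℝ < ‖q‖ := hle.lt_of_ne hne
  have hdecr : ⟪q, ‖q‖ • normalize p - q⟫_ℝ < 0 := by
    have hq : 0 < ‖q‖ := norm_pos_iff.2 fun h => by simp [h] at hlt
    rw [inner_sub_right, real_inner_smul_right, real_inner_self_eq_norm_sq, real_inner_comm]
    nlinarith
  refine hdecr.not_ge (hpq _ ?_)
  rw [inner_eq_norm_mul_inner_normalize, inner_sub_right, real_inner_smul_right,
    real_inner_self_eq_norm_sq, hν]
  exact mul_pos (norm_pos_iff.2 hp) (by linarith)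

theorem eventually_norm_add_smul_lt (hw : ⟪x, w⟫_ℝ < 0) :
    ∀ᶠ k : ℝ in 𝓝[>] 0, ‖x + k • w‖ < ‖x‖ := by
  have hcont : Continuous fun k : ℝ => 2 * ⟪x, w⟫_ℝ + k * ‖w‖ ^ 2 := by fun_prop
  have hslope : ∀ᶠ k : ℝ in 𝓝 0, 2 * ⟪x, w⟫_ℝ + k * ‖w‖ ^ 2 < 0 :=
    hcont.continuousAt.eventually (gt_mem_nhds (by linarith))
  filter_upwards [self_mem_nhdsWithin, nhdsWithin_le_nhds hslope] with k hk hneg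
  have hk : 0 < k := hk
  rw [← sq_lt_sq₀ (norm_nonneg _) (norm_nonneg _), norm_add_sq_real, real_inner_smul_right,
    norm_smul, mul_pow, Real.norm_eq_abs, sq_abs]
  nlinarith

theorem eq_of_isMinOn_dist_superlevel {f : E → ℝ} {c : ℝ} (hf : ContinuousAt f x) (hx : c ≤ f x)
    (hmin : IsMinOn (dist · y) {p | c ≤ f p} x) (hne : x ≠ y) : f x = c := by
  refine le_antisymm (not_lt.1 fun hlt => ?_) hx
  have hcloser : ∀ᶠ k : ℝ in 𝓝[>] 0, ‖x - y + k • (y - x)‖ < ‖x - y‖ := by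
    refine eventually_norm_add_smul_lt ?_
    rw [← neg_sub x y, inner_neg_right, neg_lt_zero]
    exact real_inner_self_pos.2 (sub_ne_zero.2 hne)
  have hcont : Tendsto (fun k : ℝ => x + k • (y - x)) (𝓝[>] 0) (𝓝 x) := by
    have h : Continuous fun k : ℝ => x + k • (y - x) := by fun_prop
    simpa using (h.tendsto 0).mono_left nhdsWithin_le_nhds
  obtain ⟨k, hk, hfk⟩ := (hcloser.and (hcont.eventually (hf.eventually_const_lt hlt))).exists
  have hdist : dist x y ≤ dist (x + k • (y - x)) y := hmin hfk.le
  rw [dist_eq_norm, dist_eq_norm, add_sub_right_comm] at hdist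
  linarith

end TangentBall

/-! ### Functions with nonvanishing gradient -/

section Gradient

open Metric

variable {E : Type*} [NormedAddCommGroup E] [InnerProductSpace ℝ E] [CompleteSpace E]
  {g : E → ℝ} {Dg : E → E} {S : Set E} {a b p v w x y : E} {c s t : ℝ}

theorem continuous_of_hasGradientAt (hg : ∀ p, HasGradientAt g (Dg p) p) : Continuous g :=
  continuous_iff_continuousAt.2 fun p => (hg p).continuousAt

theorem lt_of_forall_inner_gradient_pos (hS : Convex ℝ S)
    (hg : ∀ p ∈ S, HasGradientAt g (Dg p) p) (ha : a ∈ S) (hb : b ∈ S)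
    (hpos : ∀ p ∈ S, 0 < ⟪Dg p, b - a⟫_ℝ) : g a < g b := by
  obtain ⟨p, hp, hmvt⟩ :=
    domain_mvt (fun p hp => (hg p hp).hasFDerivAt.hasFDerivWithinAt) hS ha hb
  rw [InnerProductSpace.toDual_apply_apply] at hmvt
  linarith [hpos p (hS.segment_subset ha hb hp)]

theorem lt_add_smul_of_forall_inner_gradient_pos (hS : Convex ℝ S)
    (hg : ∀ p ∈ S, HasGradientAt g (Dg p) p) (hs : 0 < s) (ha : a ∈ S) (hb : a + s • w ∈ S)
    (hpos : ∀ p ∈ S, 0 < ⟪Dg p, w⟫_ℝ) : g a < g (a + s • w) := by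
  refine lt_of_forall_inner_gradient_pos hS hg ha hb fun p hp => ?_
  rw [add_sub_cancel_left, real_inner_smul_right]
  exact mul_pos hs (hpos p hp)

theorem center_eq_of_isMinOn_closedBall (hg : HasGradientAt g p y) (hp : p ≠ 0)
    (hy : y ∈ closedBall x t) (hmin : IsMinOn g (closedBall x t) y) :
    x = y + t • normalize p := by
  have hν : ‖normalize p‖ = 1 := norm_normalize_eq_one_iff.2 hp
  have ht : 0 ≤ t := dist_nonneg.trans hy
  have hmem : x - t • normalize p ∈ closedBall x t := by
    simp [norm_smul, hν, abs_of_nonneg ht]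
  have hstat := hmin.localize.hasFDerivWithinAt_nonneg hg.hasFDerivAt.hasFDerivWithinAt
    (sub_mem_posTangentConeAt_of_segment_subset ((convex_closedBall x t).segment_subset hy hmem))
  rw [InnerProductSpace.toDual_apply_apply, inner_eq_norm_mul_inner_normalize] at hstat
  have hinner : t ≤ ⟪normalize p, x - y⟫_ℝ := by
    have h := nonneg_of_mul_nonneg_right hstat (norm_pos_iff.2 hp)
    rw [sub_right_comm, inner_sub_right, real_inner_smul_right, real_inner_self_eq_norm_sq, hν] at h
    linarith
  have hdist : ‖x - y‖ ^ 2 ≤ t ^ 2 := by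
    have h : ‖x - y‖ ≤ t := by simpa [dist_eq_norm, norm_sub_rev] using hy
    gcongr
  have hzero : ‖x - (y + t • normalize p)‖ ^ 2 ≤ 0 := by
    rw [norm_sub_add_smul_sq hν]
    nlinarith
  exact sub_eq_zero.1 (norm_eq_zero.1 (pow_eq_zero_iff two_ne_zero |>.1
    (le_antisymm hzero (sq_nonneg _))))

theorem eventually_forall_mem_closedBall_lt (hg : HasGradientAt g p y) (hp : p ≠ 0) :
    ∀ᶠ s : ℝ in 𝓝[>] 0, ∀ z ∈ closedBall (y + (2 * s) • normalize p) s, g y < g z := by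
  have hν : ‖normalize p‖ = 1 := norm_normalize_eq_one_iff.2 hp
  have hp0 : 0 < ‖p‖ := norm_pos_iff.2 hp
  obtain ⟨r, hr, hlin⟩ := eventually_nhds_iff_ball.1 <| Asymptotics.isLittleO_iff.1
    (hasGradientAt_iff_isLittleO.1 hg) (by positivity : 0 < ‖p‖ / 4)
  filter_upwards [self_mem_nhdsWithin, nhdsWithin_le_nhds (gt_mem_nhds (by positivity : 0 < r / 3))]
    with s hs hsr z hz
  have hs : 0 < s := hs
  rw [mem_closedBall_iff_norm] at hz
  have hsplit : z - y = (z - (y + (2 * s) • normalize p)) + (2 * s) • normalize p := by abel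
  have hnorm : ‖z - y‖ ≤ 3 * s := by
    rw [hsplit]
    refine (norm_add_le _ _).trans ?_
    rw [norm_smul, hν, Real.norm_of_nonneg (by positivity)]
    linarith
  have hinner : s ≤ ⟪normalize p, z - y⟫_ℝ := by
    have h := neg_le_of_abs_le
      (abs_real_inner_le_norm (normalize p) (z - (y + (2 * s) • normalize p)))
    rw [hsplit, inner_add_right, real_inner_smul_right, real_inner_self_eq_norm_sq, hν]
    rw [hν, one_mul] at h
    linarith
  have herror := neg_le_of_abs_le (hlin z (mem_ball_iff_norm.2 (by linarith)))
  rw [inner_eq_norm_mul_inner_normalize] at herror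
  nlinarith

theorem joinedIn_superlevel_add_smul (hS : Convex ℝ S)
    (hg : ∀ p ∈ S, HasGradientAt g (Dg p) p) (hpos : ∀ p ∈ S, 0 < ⟪Dg p, v⟫_ℝ) (hs : 0 ≤ s)
    (ha : a ∈ S) (hb : a + s • v ∈ S) (hca : c ≤ g a) :
    JoinedIn (S ∩ {p | c ≤ g p}) a (a + s • v) := by
  refine JoinedIn.of_segment_subset fun q hq => ?_
  have hqS : q ∈ S := hS.segment_subset ha hb hq
  refine ⟨hqS, ?_⟩
  rw [segment_eq_image'] at hq
  obtain ⟨θ, hθ, rfl⟩ := hq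
  simp only [add_sub_cancel_left, smul_smul] at hqS ⊢
  rcases (mul_nonneg hθ.1 hs).eq_or_lt with h0 | h0
  · simpa [← h0] using hca
  · exact hca.trans (lt_add_smul_of_forall_inner_gradient_pos hS hg h0 ha hqS hpos).le

theorem eventually_joinedIn_superlevel (hg : ∀ p, HasGradientAt g (Dg p) p)
    (hDg : ContinuousAt Dg y) (hy : Dg y ≠ 0) (hcy : c ≤ g y) {O : Set E} (hO : O ∈ 𝓝 y) :
    ∀ᶠ y' in 𝓝 y, c ≤ g y' → JoinedIn (O ∩ {p | c ≤ g p}) y y' := by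
  have hincr : ∀ᶠ p in 𝓝 y, 0 < ⟪Dg p, Dg y⟫_ℝ :=
    (hDg.inner continuousAt_const).eventually_const_lt (real_inner_self_pos.2 hy)
  obtain ⟨R, hR, hball⟩ := eventually_nhds_iff_ball.1 (hincr.and hO)
  have hpos : ∀ p ∈ ball y R, 0 < ⟪Dg p, Dg y⟫_ℝ := fun p hp => (hball p hp).1
  have hconv := convex_ball y R
  have hshift : ∀ᶠ s : ℝ in 𝓝[>] 0, y + s • Dg y ∈ ball y R := by
    have h : Continuous fun s : ℝ => y + s • Dg y := by fun_prop
    refine nhdsWithin_le_nhds (h.continuousAt.preimage_mem_nhds ?_)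
    simpa using ball_mem_nhds y hR
  obtain ⟨s, hsR, hs⟩ := (hshift.and self_mem_nhdsWithin).exists
  have hs : 0 < s := hs
  have htop : ball y R ∩ {p | c ≤ g p} ∈ 𝓝 (y + s • Dg y) := by
    have hlt : c < g (y + s • Dg y) := hcy.trans_lt <| lt_add_smul_of_forall_inner_gradient_pos
      hconv (fun p _ => hg p) hs (mem_ball_self hR) hsR hpos
    filter_upwards [isOpen_ball.mem_nhds hsR,
      (hg _).differentiableAt.continuousAt.eventually_const_lt hlt] with p hp hcp
    exact ⟨hp, hcp.le⟩
  obtain ⟨r, hr, hrtop⟩ := Metric.mem_nhds_iff.1 htop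
  -- The path climbs from `y` along `Dg y`, moves across high above the level `c`, and descends.
  filter_upwards [ball_mem_nhds y hR, ball_mem_nhds y hr] with y' hy'R hy'r hcy'
  have hy'top : y' + s • Dg y ∈ ball (y + s • Dg y) r := by simpa [mem_ball] using hy'r
  have hclimb := joinedIn_superlevel_add_smul hconv (fun p _ => hg p) hpos hs.le
    (mem_ball_self hR) hsR hcy
  have hacross : JoinedIn (ball y R ∩ {p | c ≤ g p}) (y + s • Dg y) (y' + s • Dg y) :=
    .of_segment_subset
      (((convex_ball _ r).segment_subset (mem_ball_self hr) hy'top).trans hrtop)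
  have hdescend := (joinedIn_superlevel_add_smul hconv (fun p _ => hg p) hpos hs.le
    hy'R (hrtop hy'top).1 hcy').symm
  exact ((hclimb.trans hacross).trans hdescend).mono
    (Set.inter_subset_inter_left _ fun p hp => (hball p hp).2)

end Gradient

namespace HopfLax

open Metric

/-! ### The Hopf–Lax function and its minimizers -/

section Minimizers

variable {n : ℕ} {g : Euc n → ℝ} {Dg : Euc n → Euc n} {x x' y z w : Euc n} {t t' : ℝ}

theorem HLu_eq_sInf_image_unitClosedBall (ht : 0 ≤ t) :
    HLu g x t = sInf ((fun v => g (x + t • v)) '' closedBall 0 1) := by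
  rw [HLu, ← image_add_smul_unitClosedBall ht, Set.image_image]

theorem continuousOn_HLu (hg : Continuous g) :
    ContinuousOn (fun q : Euc n × ℝ => HLu g q.1 q.2) {q | 0 ≤ q.2} := by
  have hcont : Continuous fun q : Euc n × ℝ =>
      sInf ((fun v => g (q.1 + q.2 • v)) '' closedBall 0 1) :=
    (isCompact_closedBall 0 1).continuous_sInf
      (by fun_prop : Continuous fun z : (Euc n × ℝ) × Euc n => g (z.1.1 + z.1.2 • z.2))
  exact hcont.continuousOn.congr fun q hq => HLu_eq_sInf_image_unitClosedBall hq

theorem continuousAt_HLu (hg : Continuous g) (ht : 0 < t) :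
    ContinuousAt (fun q : Euc n × ℝ => HLu g q.1 q.2) (x, t) :=
  (continuousOn_HLu hg).continuousAt <|
    continuous_snd.continuousAt.preimage_mem_nhds (Ici_mem_nhds ht)

theorem continuous_HLu (hg : Continuous g) (ht : 0 ≤ t) : Continuous fun x => HLu g x t :=
  (continuousOn_HLu hg).comp_continuous (f := fun x => (x, t)) (by fun_prop) fun _ => ht

theorem isLeast_HLu (hg : Continuous g) (ht : 0 ≤ t) :
    IsLeast (g '' closedBall x t) (HLu g x t) :=
  ((isCompact_closedBall x t).image hg).isLeast_sInf ((nonempty_closedBall.2 ht).image g)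

theorem HLu_le (hg : Continuous g) (hw : w ∈ closedBall x t) : HLu g x t ≤ g w :=
  (isLeast_HLu hg (nonempty_closedBall.1 ⟨w, hw⟩)).2 ⟨w, hw, rfl⟩

theorem mem_HLL_iff : y ∈ HLL g x t ↔ y ∈ closedBall x t ∧ g y = HLu g x t := by
  rw [mem_closedBall_iff_norm]
  rfl

theorem nonempty_HLL (hg : Continuous g) (ht : 0 ≤ t) : (HLL g x t).Nonempty := by
  obtain ⟨y, hy, hmin⟩ := (isLeast_HLu (x := x) hg ht).1
  exact ⟨y, mem_HLL_iff.2 ⟨hy, hmin⟩⟩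

theorem mem_HLL_iff_isMinOn (hg : Continuous g) :
    y ∈ HLL g x t ↔ y ∈ closedBall x t ∧ IsMinOn g (closedBall x t) y := by
  rw [mem_HLL_iff]
  refine and_congr_right fun hy => ⟨fun h w hw => h.trans_le (HLu_le hg hw), fun hmin => ?_⟩
  have hleast : IsLeast (g '' closedBall x t) (g y) := ⟨⟨y, hy, rfl⟩, Set.forall_mem_image.2 hmin⟩
  exact hleast.unique (isLeast_HLu hg (nonempty_closedBall.1 ⟨y, hy⟩))

theorem mem_HLL_of_closedBall_subset (hg : Continuous g)
    (hsub : closedBall x' t' ⊆ closedBall x t) (hy' : y ∈ closedBall x' t')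
    (hy : y ∈ HLL g x t) : y ∈ HLL g x' t' :=
  (mem_HLL_iff_isMinOn hg).2 ⟨hy', ((mem_HLL_iff_isMinOn hg).1 hy).2.on_subset hsub⟩

theorem HLL_subset_HLL (hg : Continuous g) (hsub : closedBall x' t' ⊆ closedBall x t)
    (hy' : y ∈ closedBall x' t') (hy : y ∈ HLL g x t) : HLL g x' t' ⊆ HLL g x t := fun _ hw =>
  mem_HLL_iff.2 ⟨hsub (mem_HLL_iff.1 hw).1,
    (hw.2.trans (mem_HLL_of_closedBall_subset hg hsub hy' hy).2.symm).trans hy.2⟩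

theorem eventually_HLL_subset (hg : Continuous g) (ht : 0 ≤ t) {O : Set (Euc n)} (hO : IsOpen O)
    (hsub : HLL g x t ⊆ O) : ∀ᶠ x' in 𝓝 x, HLL g x' t ⊆ O := by
  have hball : ∀ {x v : Euc n}, v ∈ closedBall 0 1 → x + t • v ∈ closedBall x t := fun {x _} hv =>
    (image_add_smul_unitClosedBall ht x).subset ⟨_, hv, rfl⟩
  have hcont : Continuous fun z : Euc n × Euc n => z.1 + t • z.2 := by fun_prop
  have hactive : ∀ᶠ x' in 𝓝 x, ∀ v ∈ closedBall (0 : Euc n) 1, g (x' + t • v) = HLu g x' t →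
      x' + t • v ∈ O :=
    eventually_forall_active_of_isCompact (f := fun x' v => g (x' + t • v))
      (φ := fun x' => HLu g x' t) (Q := fun x' v => x' + t • v ∈ O) (isCompact_closedBall 0 1)
      (fun _ _ => (hg.comp hcont).continuousAt) (continuous_HLu hg ht).continuousAt
      fun v hv hmin => hcont.continuousAt.preimage_mem_nhds
        (hO.mem_nhds (hsub (mem_HLL_iff.2 ⟨hball hv, hmin⟩)))
  filter_upwards [hactive] with x' hx' y hy
  rw [mem_HLL_iff, ← image_add_smul_unitClosedBall ht x'] at hy
  obtain ⟨⟨v, hv, rfl⟩, hmin⟩ := hy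
  exact hx' v hv hmin

theorem eventually_HLu_lt_HLu_add_smul (hg : ∀ y, HasGradientAt g (Dg y) y) (hDg : Continuous Dg)
    (ht : 0 ≤ t) (hz : HLL g x t = {z}) (hw : 0 < ⟪Dg z, w⟫_ℝ) :
    ∀ᶠ k : ℝ in 𝓝[>] 0, HLu g x t < HLu g (x + k • w) t := by
  have hgc := continuous_of_hasGradientAt hg
  have hcont : Continuous fun p => ⟪Dg p, w⟫_ℝ := by fun_prop
  obtain ⟨r, hr, hpos⟩ := eventually_nhds_iff_ball.1
    (hcont.continuousAt.eventually_const_lt hw)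
  have hnear : ∀ᶠ x' in 𝓝 x, HLL g x' t ⊆ ball z (r / 2) :=
    eventually_HLL_subset hgc ht isOpen_ball (by simpa [hz] using hr)
  have hshift : Tendsto (fun k : ℝ => x + k • w) (𝓝[>] 0) (𝓝 x) := by
    have h : Continuous fun k : ℝ => x + k • w := by fun_prop
    simpa using (h.tendsto 0).mono_left nhdsWithin_le_nhds
  have hsmall : ∀ᶠ k : ℝ in 𝓝[>] 0, ‖k • w‖ < r / 2 := by
    have h : Continuous fun k : ℝ => ‖k • w‖ := by fun_prop
    exact nhdsWithin_le_nhds (h.continuousAt.eventually (gt_mem_nhds (by simpa using hr)))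
  -- Translating a minimizer over the shifted ball back by `k • w` lowers the value of `g`.
  filter_upwards [self_mem_nhdsWithin, hsmall, hshift.eventually hnear] with k hk hkr hkz
  obtain ⟨z', hz'⟩ := nonempty_HLL (x := x + k • w) hgc ht
  have hz'r : dist z' z < r / 2 := hkz hz'
  have hback : z' - k • w ∈ closedBall x t := by
    rw [mem_closedBall_iff_norm, sub_sub, add_comm (k • w)]
    exact hz'.1
  have hbackr : z' - k • w ∈ ball z r := by
    rw [mem_ball]
    linarith [dist_triangle (z' - k • w) z' z, dist_self_sub_left z' (k • w)]
  calc HLu g x t ≤ g (z' - k • w) := HLu_le hgc hback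
    _ < g (z' - k • w + k • w) :=
      lt_add_smul_of_forall_inner_gradient_pos (convex_ball z r) (fun p _ => hg p) hk hbackr
        (by rw [sub_add_cancel, mem_ball]; linarith) hpos
    _ = HLu g (x + k • w) t := by rw [sub_add_cancel, hz'.2]

end Minimizers

/-! ### Characteristics -/

section Characteristics

variable {n : ℕ} {g : Euc n → ℝ} {Dg : Euc n → Euc n} {x y z : Euc n} {s t : ℝ}

theorem continuousAt_charX (hDg : Continuous Dg) (hy : Dg y ≠ 0) :
    ContinuousAt (fun q : Euc n × ℝ => charX Dg q.1 q.2) (y, t) := by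
  have hfst : ContinuousAt (fun q : Euc n × ℝ => Dg q.1) (y, t) :=
    (hDg.comp continuous_fst).continuousAt
  exact continuousAt_fst.add
    (continuousAt_snd.smul ((hfst.norm.inv₀ (norm_ne_zero_iff.2 hy)).smul hfst))

theorem closedBall_charX_subset (hy : Dg y ≠ 0) (hst : s ≤ t) :
    closedBall (charX Dg y s) s ⊆ closedBall (charX Dg y t) t :=
  closedBall_add_smul_subset (norm_normalize_eq_one_iff.2 hy) hst

theorem mem_closedBall_charX (hy : Dg y ≠ 0) (ht : 0 ≤ t) : y ∈ closedBall (charX Dg y t) t :=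
  closedBall_charX_subset hy ht (by simp [charX])

theorem inner_gradient_pos_of_mem_closedBall_charX (hy : Dg y ≠ 0)
    (hz : z ∈ closedBall (charX Dg y t) t) (hne : z ≠ y) : 0 < ⟪Dg y, z - y⟫_ℝ := by
  rw [inner_eq_norm_mul_inner_normalize]
  exact mul_pos (norm_pos_iff.2 hy)
    (inner_pos_of_mem_closedBall_add_smul (norm_normalize_eq_one_iff.2 hy) hz hne)

theorem exists_mem_ball_charX (hy : Dg y ≠ 0) (hz : 0 < ⟪Dg y, z - y⟫_ℝ) :
    ∃ t : ℝ, 0 < t ∧ z ∈ ball (charX Dg y t) t := by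
  rw [inner_eq_norm_mul_inner_normalize] at hz
  exact exists_mem_ball_add_smul (norm_normalize_eq_one_iff.2 hy)
    (pos_of_mul_pos_right hz (norm_nonneg _))

theorem eq_charX_of_mem_HLL (hg : ∀ y, HasGradientAt g (Dg y) y) (hy : Dg y ≠ 0)
    (hmem : y ∈ HLL g x t) : x = charX Dg y t :=
  have hmin := (mem_HLL_iff_isMinOn (continuous_of_hasGradientAt hg)).1 hmem
  center_eq_of_isMinOn_closedBall (hg y) hy hmin.1 hmin.2

theorem mem_HLL_charX_zero : y ∈ HLL g (charX Dg y 0) 0 := by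
  simp [mem_HLL_iff, charX, HLu]

theorem mem_HLL_charX_of_le (hg : Continuous g) (hy : Dg y ≠ 0) (hs : 0 ≤ s) (hst : s ≤ t)
    (hmem : y ∈ HLL g (charX Dg y t) t) : y ∈ HLL g (charX Dg y s) s :=
  mem_HLL_of_closedBall_subset hg (closedBall_charX_subset hy hst) (mem_closedBall_charX hy hs) hmem

theorem HLL_charX_eq_singleton_of_le (hg : Continuous g) (hy : Dg y ≠ 0) (hs : 0 ≤ s)
    (hst : s ≤ t) (hsing : HLL g (charX Dg y t) t = {y}) : HLL g (charX Dg y s) s = {y} := by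
  have hmem : y ∈ HLL g (charX Dg y t) t := hsing.superset rfl
  exact Set.eq_singleton_iff_unique_mem.2 ⟨mem_HLL_charX_of_le hg hy hs hst hmem, fun w hw =>
    hsing.subset (HLL_subset_HLL hg (closedBall_charX_subset hy hst) (mem_closedBall_charX hy hs)
      hmem hw)⟩

theorem mem_HLL_charX_of_mem_closure (hg : Continuous g) (hDg : Continuous Dg) (hy : Dg y ≠ 0)
    (hmem : (y, t) ∈ closure {q : Euc n × ℝ | 0 ≤ q.2 ∧ q.1 ∈ HLL g (charX Dg q.1 q.2) q.2}) :
    y ∈ HLL g (charX Dg y t) t := by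
  set S := {q : Euc n × ℝ | 0 ≤ q.2 ∧ q.1 ∈ HLL g (charX Dg q.1 q.2) q.2}
  have ht : 0 ≤ t :=
    closure_minimal (fun q hq => hq.1) (isClosed_le continuous_const continuous_snd) hmem
  have hcurve : Tendsto (fun q : Euc n × ℝ => (charX Dg q.1 q.2, q.2)) (𝓝[S] (y, t))
      (𝓝[{q | 0 ≤ q.2}] (charX Dg y t, t)) :=
    tendsto_nhdsWithin_of_tendsto_nhds_of_eventually_within _
      (((continuousAt_charX hDg hy).prodMk continuousAt_snd).tendsto.mono_left nhdsWithin_le_nhds)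
      (eventually_mem_nhdsWithin.mono fun q hq => hq.1)
  have hHLu := (continuousOn_HLu hg (charX Dg y t, t) ht).tendsto.comp hcurve
  have hval : Tendsto (fun q : Euc n × ℝ => g q.1) (𝓝[S] (y, t)) (𝓝 (g y)) :=
    ((hg.comp continuous_fst).tendsto (y, t)).mono_left nhdsWithin_le_nhds
  have := mem_closure_iff_nhdsWithin_neBot.1 hmem
  refine mem_HLL_iff.2 ⟨mem_closedBall_charX hy ht, tendsto_nhds_unique hval (hHLu.congr' ?_)⟩
  filter_upwards [eventually_mem_nhdsWithin] with q hq using hq.2.2.symm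

end Characteristics

/-! ### Differentiability of the Hopf–Lax function -/

section Differentiability

variable {n : ℕ} {g : Euc n → ℝ} {Dg : Euc n → Euc n} {x y z : Euc n} {t : ℝ}

/-- The derivative at `q` of `(x, t) ↦ g (x + t • v)`, when `Dg` is the gradient of `g`. Writing
`HLu g x t` as the minimum of these functions over the fixed unit ball of `v`s makes Danskin's
argument applicable. -/
def fderivShift (Dg : Euc n → Euc n) (q : Euc n × ℝ) (v : Euc n) : (Euc n × ℝ) →L[ℝ] ℝ :=
  (innerSL ℝ (Dg (q.1 + q.2 • v))).comp (.fst ℝ (Euc n) ℝ + .smulRightL ℝ _ _ (.snd ℝ (Euc n) ℝ) v)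

theorem fderivShift_apply (q h : Euc n × ℝ) (v : Euc n) :
    fderivShift Dg q v h = ⟪Dg (q.1 + q.2 • v), h.1 + h.2 • v⟫_ℝ :=
  rfl

theorem hasFDerivAt_shift (hg : ∀ y, HasGradientAt g (Dg y) y) (q : Euc n × ℝ) (v : Euc n) :
    HasFDerivAt (fun q : Euc n × ℝ => g (q.1 + q.2 • v)) (fderivShift Dg q v) q := by
  have hshift : HasFDerivAt (fun q : Euc n × ℝ => q.1 + q.2 • v)
      (.fst ℝ (Euc n) ℝ + .smulRightL ℝ _ _ (.snd ℝ (Euc n) ℝ) v) q :=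
    hasFDerivAt_fst.add (hasFDerivAt_snd.smul_const v)
  exact (hg _).hasFDerivAt.comp q hshift

theorem continuous_fderivShift (hDg : Continuous Dg) :
    Continuous (Function.uncurry (fderivShift Dg)) := by
  unfold fderivShift Function.uncurry
  fun_prop

theorem eventually_snd_pos (ht : 0 < t) : ∀ᶠ q : Euc n × ℝ in 𝓝 (x, t), 0 < q.2 :=
  continuousAt_snd.eventually_const_lt ht

theorem exists_smul_of_mem_HLL (ht : 0 ≤ t) (hy : y ∈ HLL g x t) :
    ∃ v ∈ closedBall (0 : Euc n) 1, x + t • v = y :=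
  (image_add_smul_unitClosedBall ht x).superset (mem_HLL_iff.1 hy).1

theorem isLeast_image_unitClosedBall_HLu (hg : Continuous g) (ht : 0 ≤ t) :
    IsLeast ((fun v => g (x + t • v)) '' closedBall 0 1) (HLu g x t) := by
  rw [← Set.image_image g, image_add_smul_unitClosedBall ht]
  exact isLeast_HLu hg ht

theorem inner_gradient_eq_of_hasFDerivAt_HLu (hg : ∀ y, HasGradientAt g (Dg y) y) (ht : 0 < t)
    {L : (Euc n × ℝ) →L[ℝ] ℝ} (hL : HasFDerivAt (fun q : Euc n × ℝ => HLu g q.1 q.2) L (x, t))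
    (hy : y ∈ HLL g x t) (w : Euc n) : ⟪Dg y, w⟫_ℝ = L (w, 0) := by
  obtain ⟨v, hv, rfl⟩ := exists_smul_of_mem_HLL ht.le hy
  have hle : ∀ᶠ q : Euc n × ℝ in 𝓝 (x, t), HLu g q.1 q.2 ≤ g (q.1 + q.2 • v) :=
    (eventually_snd_pos ht).mono fun q hq =>
      (isLeast_image_unitClosedBall_HLu (continuous_of_hasGradientAt hg) hq.le).2 ⟨v, hv, rfl⟩
  rw [fderiv_eq_of_eventually_le hL (hasFDerivAt_shift hg (x, t) v) hle hy.2.symm,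
    fderivShift_apply, zero_smul, add_zero]

theorem eq_of_mem_HLL_of_gradient_eq (hg : ∀ y, HasGradientAt g (Dg y) y) (hD : Dg y ≠ 0)
    (hy : y ∈ HLL g x t) (hz : z ∈ HLL g x t) (heq : Dg y = Dg z) : y = z := by
  have hcenter := (eq_charX_of_mem_HLL hg hD hy).symm.trans (eq_charX_of_mem_HLL hg (heq ▸ hD) hz)
  rw [charX, charX, heq] at hcenter
  exact add_right_cancel hcenter

theorem not_differentiableAt_HLu (hg : ∀ y, HasGradientAt g (Dg y) y) (ht : 0 < t)
    (hD : Dg y ≠ 0) (hy : y ∈ HLL g x t) (hz : z ∈ HLL g x t) (hne : y ≠ z) :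
    ¬ DifferentiableAt ℝ (fun q : Euc n × ℝ => HLu g q.1 q.2) (x, t) := fun hdiff =>
  hne <| eq_of_mem_HLL_of_gradient_eq hg hD hy hz <| ext_inner_right ℝ fun w =>
    (inner_gradient_eq_of_hasFDerivAt_HLu hg ht hdiff.hasFDerivAt hy w).trans
      (inner_gradient_eq_of_hasFDerivAt_HLu hg ht hdiff.hasFDerivAt hz w).symm

theorem differentiableAt_HLu_of_gradient_eq (hg : ∀ y, HasGradientAt g (Dg y) y)
    (hDg : Continuous Dg) (ht : 0 < t) (heq : ∀ y ∈ HLL g x t, ∀ z ∈ HLL g x t, Dg y = Dg z) :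
    DifferentiableAt ℝ (fun q : Euc n × ℝ => HLu g q.1 q.2) (x, t) := by
  have hgc := continuous_of_hasGradientAt hg
  obtain ⟨y, hy⟩ := nonempty_HLL (x := x) hgc ht.le
  obtain ⟨v, -, rfl⟩ := exists_smul_of_mem_HLL ht.le hy
  have hactive : ∀ v' ∈ closedBall (0 : Euc n) 1, g (x + t • v') = HLu g x t →
      fderivShift Dg (x, t) v' = fderivShift Dg (x, t) v := by
    intro v' hv' hmin
    have hy' : x + t • v' ∈ HLL g x t :=
      mem_HLL_iff.2 ⟨(image_add_smul_unitClosedBall ht.le x).subset ⟨v', hv', rfl⟩, hmin⟩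
    by_cases hD : Dg (x + t • v) = 0
    · refine ContinuousLinearMap.ext fun h => ?_
      simp only [fderivShift_apply, heq _ hy' _ hy, hD, inner_zero_left]
    · have hvv' := eq_of_mem_HLL_of_gradient_eq hg hD hy hy' (heq _ hy _ hy')
      rw [smul_right_injective _ ht.ne' (add_left_cancel hvv')]
  have hfderiv : HasFDerivAt (fun q : Euc n × ℝ => HLu g q.1 q.2)
      (fderivShift Dg (x, t) v) (x, t) :=
    hasFDerivAt_min_of_forall_active (f := fun (q : Euc n × ℝ) v => g (q.1 + q.2 • v))
      (isCompact_closedBall 0 1) (hasFDerivAt_shift hg)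
      (hgc.comp (by fun_prop : Continuous fun z : (Euc n × ℝ) × Euc n => z.1.1 + z.1.2 • z.2))
      (continuous_fderivShift hDg) (continuousAt_HLu hgc ht)
      ((eventually_snd_pos ht).mono fun q hq => isLeast_image_unitClosedBall_HLu hgc hq.le) hactive
  exact hfderiv.differentiableAt

end Differentiability

/-! ### Termination times and termination points -/

section Termination

variable {n : ℕ} {g : Euc n → ℝ} {Dg : Euc n → Euc n} {x y z : Euc n} {s t : ℝ}

/-- The real times `t ≥ 0` between the first and the second termination time of the characteristic
from `y`. Unlike in `TM`, the time `0` is allowed: this makes the set closed and nonempty as soon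
as the first termination time is finite. -/
def terminationTimes (g : Euc n → ℝ) (Dg : Euc n → Euc n) (y : Euc n) : Set ℝ :=
  {t | 0 ≤ t ∧ y ∈ HLL g (charX Dg y t) t ∧ ∀ s > t, HLL g (charX Dg y s) s ≠ {y}}

/-- The point `(X(y, t), t)` of space-time reached at time `t` by the characteristic from `y`. -/
def charCurve (Dg : Euc n → Euc n) (y : Euc n) (t : ℝ) : Euc n × ℝ :=
  (charX Dg y t, t)

/-- The termination points of the characteristics emanating from `N`, including those at time
`0`. -/
def terminationPoints (g : Euc n → ℝ) (Dg : Euc n → Euc n) (N : Set (Euc n)) : Set (Euc n × ℝ) :=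
  {p | ∃ y ∈ N, ∃ t ∈ terminationTimes g Dg y, charCurve Dg y t = p}

theorem continuous_charCurve : Continuous (charCurve Dg y) := by
  unfold charCurve charX
  fun_prop

theorem continuousAt_uncurry_charCurve (hDg : Continuous Dg) (hy : Dg y ≠ 0) :
    ContinuousAt (Function.uncurry (charCurve Dg)) (y, t) :=
  (continuousAt_charX hDg hy).prodMk continuousAt_snd

theorem mem_terminationTimes_of_le (hg : Continuous g) (hy : Dg y ≠ 0)
    (hs : s ∈ terminationTimes g Dg y) (hst : s ≤ t) {r : ℝ} (htr : t ≤ r)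
    (hr : y ∈ HLL g (charX Dg y r) r) : t ∈ terminationTimes g Dg y :=
  ⟨hs.1.trans hst, mem_HLL_charX_of_le hg hy (hs.1.trans hst) htr hr,
    fun r hr => hs.2.2 r (hst.trans_lt hr)⟩

theorem ordConnected_terminationTimes (hg : Continuous g) (hy : Dg y ≠ 0) :
    (terminationTimes g Dg y).OrdConnected :=
  ⟨fun _ ha _ hb _ hs => mem_terminationTimes_of_le hg hy ha hs.1 hs.2 hb.2.1⟩

theorem mem_terminationTimes_of_ne_singleton (hg : Continuous g) (hy : Dg y ≠ 0) (ht : 0 ≤ t)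
    (hmem : y ∈ HLL g (charX Dg y t) t) (hne : HLL g (charX Dg y t) t ≠ {y}) :
    t ∈ terminationTimes g Dg y :=
  ⟨ht, hmem, fun _ hs hsing => hne (HLL_charX_eq_singleton_of_le hg hy ht hs.le hsing)⟩

theorem mem_terminationTimes_of_mem_HLL (hg : ∀ y, HasGradientAt g (Dg y) y) (hD : Dg y ≠ 0)
    (hy : y ∈ HLL g x t) (hz : z ∈ HLL g x t) (hne : z ≠ y) : t ∈ terminationTimes g Dg y := by
  obtain rfl := eq_charX_of_mem_HLL hg hD hy
  exact mem_terminationTimes_of_ne_singleton (continuous_of_hasGradientAt hg) hD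
    ((norm_nonneg _).trans hy.1) hy fun hsing => hne (hsing.subset hz)

theorem mem_HLL_charX_of_mem_closure_times (hg : Continuous g) (hDg : Continuous Dg) (hy : Dg y ≠ 0)
    (ht : t ∈ closure {s | 0 ≤ s ∧ y ∈ HLL g (charX Dg y s) s}) : y ∈ HLL g (charX Dg y t) t :=
  mem_HLL_charX_of_mem_closure hg hDg hy <|
    map_mem_closure (by fun_prop : Continuous fun s : ℝ => (y, s)) ht fun _ hs => hs

theorem exists_mem_terminationTimes_le (hg : Continuous g) (hDg : Continuous Dg) (hy : Dg y ≠ 0)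
    (ht : 0 ≤ t) (hne : HLL g (charX Dg y t) t ≠ {y}) : ∃ s ∈ terminationTimes g Dg y, s ≤ t := by
  set S := {s : ℝ | 0 ≤ s ∧ (s = 0 ∨ HLL g (charX Dg y s) s = {y})}
  have hzero : (0 : ℝ) ∈ S := ⟨le_rfl, .inl rfl⟩
  have hle : ∀ s ∈ S, s ≤ t := by
    rintro s ⟨-, rfl | hsing⟩
    · exact ht
    · exact not_lt.1 fun hts => hne (HLL_charX_eq_singleton_of_le hg hy ht hts.le hsing)
  have hSmem : S ⊆ {s | 0 ≤ s ∧ y ∈ HLL g (charX Dg y s) s} := by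
    rintro s ⟨hs, rfl | hsing⟩
    · exact ⟨le_rfl, mem_HLL_charX_zero⟩
    · exact ⟨hs, hsing.superset rfl⟩
  have hnonneg : 0 ≤ sSup S := le_csSup ⟨t, hle⟩ hzero
  exact ⟨sSup S, ⟨hnonneg, mem_HLL_charX_of_mem_closure_times hg hDg hy
      (closure_mono hSmem (csSup_mem_closure ⟨0, hzero⟩ ⟨t, hle⟩)),
    fun s hs hsing => hs.not_ge (le_csSup ⟨t, hle⟩ ⟨hnonneg.trans hs.le, .inr hsing⟩)⟩,
    csSup_le ⟨0, hzero⟩ hle⟩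

theorem tbar_le_ofReal_iff (ht : 0 ≤ t) :
    tbar g Dg y ≤ ENNReal.ofReal t ↔ ∀ s > t, HLL g (charX Dg y s) s ≠ {y} := by
  simp only [tbar, sSup_le_iff, Set.forall_mem_image, Set.mem_ofPred_eq,
    ENNReal.ofReal_le_ofReal_iff ht]
  exact ⟨fun h s hs hsing => hs.not_ge (h ⟨ht.trans_lt hs, hsing⟩),
    fun h s hs => not_lt.1 fun hts => h s hts hs.2⟩

theorem ofReal_le_tsnd_iff (hg : Continuous g) (hDg : Continuous Dg) (hy : Dg y ≠ 0) (ht : 0 < t) :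
    ENNReal.ofReal t ≤ tsnd g Dg y ↔ y ∈ HLL g (charX Dg y t) t := by
  have hiff : ENNReal.ofReal t ≤ tsnd g Dg y ↔
      ∀ s, 0 < s → s < t → y ∈ HLL g (charX Dg y s) s := by
    simp only [tsnd, le_sInf_iff, Set.forall_mem_image, Set.mem_ofPred_eq]
    refine forall_congr' fun s => ⟨fun h hs hst => ?_, fun h hs => ?_⟩
    · by_contra hmem
      exact hst.not_ge ((ENNReal.ofReal_le_ofReal_iff hs.le).1 (h ⟨hs, hmem⟩))
    · exact (ENNReal.ofReal_le_ofReal_iff hs.1.le).2 (not_lt.1 fun hst => hs.2 (h hs.1 hst))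
  refine hiff.trans ⟨fun h => mem_HLL_charX_of_mem_closure_times hg hDg hy ?_,
    fun hmem s hs hst => mem_HLL_charX_of_le hg hy hs.le hst.le hmem⟩
  have hIoo : Set.Ioo 0 t ⊆ {s | 0 ≤ s ∧ y ∈ HLL g (charX Dg y s) s} :=
    fun s hs => ⟨hs.1.le, h s hs.1 hs.2⟩
  exact closure_mono hIoo ((closure_Ioo ht.ne).superset (Set.right_mem_Icc.2 ht.le))

theorem TM_eq_terminationPoints (hg : Continuous g) (hDg : Continuous Dg) :
    TM g Dg = terminationPoints g Dg {y | Dg y ≠ 0} ∩ {p | 0 < p.2} := by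
  ext p
  constructor
  · rintro ⟨y, t, hy, -, ht, htbar, htsnd, rfl⟩
    exact ⟨⟨y, hy, t, ⟨ht.le, (ofReal_le_tsnd_iff hg hDg hy ht).1 htsnd,
      (tbar_le_ofReal_iff ht.le).1 htbar⟩, rfl⟩, ht⟩
  · rintro ⟨⟨y, hy, t, ⟨ht', hmem, hsing⟩, rfl⟩, ht⟩
    have htbar := (tbar_le_ofReal_iff ht').2 hsing
    exact ⟨y, t, hy, htbar.trans_lt ENNReal.ofReal_lt_top, ht, htbar,
      (ofReal_le_tsnd_iff hg hDg hy ht).2 hmem, rfl⟩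

theorem SigmaSet_subset_TM (hg : ∀ y, HasGradientAt g (Dg y) y) (hDg : Continuous Dg) :
    SigmaSet g ⊆ TM g Dg := by
  rintro ⟨x, t⟩ ⟨ht, hndiff⟩
  have hgradient : ∃ y ∈ HLL g x t, ∃ z ∈ HLL g x t, Dg y ≠ Dg z := by
    by_contra! heq
    exact hndiff (differentiableAt_HLu_of_gradient_eq hg hDg ht heq)
  have hgradient' : ∃ y ∈ HLL g x t, ∃ z ∈ HLL g x t, Dg y ≠ 0 ∧ z ≠ y := by
    obtain ⟨y, hy, z, hz, hne⟩ := hgradient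
    by_cases hD : Dg y = 0
    · exact ⟨z, hz, y, hy, hD ▸ hne.symm, ne_of_apply_ne Dg hne⟩
    · exact ⟨y, hy, z, hz, hD, ne_of_apply_ne Dg hne.symm⟩
  obtain ⟨y, hy, z, hz, hD, hne⟩ := hgradient'
  rw [TM_eq_terminationPoints (continuous_of_hasGradientAt hg) hDg]
  refine ⟨⟨y, hD, t, mem_terminationTimes_of_mem_HLL hg hD hy hz hne, ?_⟩, ht⟩
  rw [charCurve, ← eq_charX_of_mem_HLL hg hD hy]

theorem TM_diff_T1_subset_SigmaSet (hg : ∀ y, HasGradientAt g (Dg y) y) (hDg : Continuous Dg) :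
    TM g Dg \ T1 g Dg ⊆ SigmaSet g := by
  rintro p ⟨hTM, hT1⟩
  obtain ⟨⟨y, hD, t, ⟨-, hy, -⟩, rfl⟩, ht⟩ :=
    (TM_eq_terminationPoints (continuous_of_hasGradientAt hg) hDg).subset hTM
  obtain ⟨z, hz, hne⟩ : ∃ z ∈ HLL g (charX Dg y t) t, z ≠ y := by
    by_contra! hunique
    exact hT1 ⟨hTM, y, Set.eq_singleton_iff_unique_mem.2 ⟨hy, hunique⟩⟩
  exact ⟨ht, not_differentiableAt_HLu hg ht hD hy hz hne.symm⟩

theorem SigmaSet_union_T1_eq_TM (hg : ∀ y, HasGradientAt g (Dg y) y) (hDg : Continuous Dg) :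
    SigmaSet g ∪ T1 g Dg = TM g Dg :=
  (Set.union_subset (SigmaSet_subset_TM hg hDg) fun _ hp => hp.1).antisymm <|
    Set.sdiff_subset_iff.1 (TM_diff_T1_subset_SigmaSet hg hDg) |>.trans (Set.union_comm ..).subset

end Termination

/-! ### Closest points of superlevel sets of the Hopf–Lax function -/

section ClosestPoint

variable {n : ℕ} {g : Euc n → ℝ} {Dg : Euc n → Euc n} {x y z : Euc n} {c t : ℝ}

theorem mem_HLL_of_le_HLu (hg : Continuous g) (hy : y ∈ closedBall x t) (hle : g y ≤ HLu g x t) :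
    y ∈ HLL g x t :=
  mem_HLL_iff.2 ⟨hy, hle.antisymm (HLu_le hg hy)⟩

theorem charX_add (s : ℝ) : charX Dg y (t + s) = charX Dg y t + s • normalize (Dg y) := by
  rw [charX, add_smul, ← add_assoc]
  rfl

theorem eventually_forall_le_HLu_mem (hg : ∀ y, HasGradientAt g (Dg y) y) (hy : Dg y ≠ 0)
    (ht : 0 ≤ t) {U : Set (Euc n)} (hU : U ∈ 𝓝 (charX Dg y t)) :
    ∀ᶠ q : ℝ × Euc n in 𝓝 (0, y), ∀ x, dist x q.2 ≤ t + q.1 → g q.2 ≤ HLu g x t → x ∈ U := by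
  have hgc := continuous_of_hasGradientAt hg
  have hcompact : ∀ᶠ q : ℝ × Euc n in 𝓝 (0, y), ∀ x ∈ closedBall y (t + 2),
      dist x q.2 ≤ t + q.1 → g q.2 ≤ HLu g x t → x ∈ U := by
    refine (isCompact_closedBall y (t + 2)).eventually_forall_of_forall_eventually fun x _ => ?_
    by_cases hx : dist x y ≤ t ∧ g y ≤ HLu g x t
    · obtain rfl := eq_charX_of_mem_HLL hg hy
        (mem_HLL_of_le_HLu hgc (mem_closedBall'.2 hx.1) hx.2)
      filter_upwards [continuousAt_snd.preimage_mem_nhds hU] with q hq _ _ using hq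
    · have hdist : IsClosed {q : (ℝ × Euc n) × Euc n | dist q.2 q.1.2 ≤ t + q.1.1} :=
        isClosed_le (by fun_prop) (by fun_prop)
      have hvalue : IsClosed {q : (ℝ × Euc n) × Euc n | g q.1.2 ≤ HLu g q.2 t} :=
        isClosed_le (by fun_prop) ((continuous_HLu hgc ht).comp continuous_snd)
      filter_upwards [(hdist.inter hvalue).isOpen_compl.mem_nhds (by simpa using hx)]
        with q hq hqdist hqle using absurd ⟨hqdist, hqle⟩ hq
  have hsmall : ∀ᶠ q : ℝ × Euc n in 𝓝 (0, y), q.1 < 1 ∧ dist q.2 y < 1 :=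
    prod_mem_nhds (Iio_mem_nhds one_pos) (ball_mem_nhds y one_pos)
  filter_upwards [hcompact, hsmall] with q hq hq1 x hdist
  exact hq x (by rw [mem_closedBall]; linarith [dist_triangle x q.2 y]) hdist

theorem eventually_exists_isMinOn_dist (hg : ∀ y, HasGradientAt g (Dg y) y) (hDg : Continuous Dg)
    (hy : Dg y ≠ 0) (ht : 0 ≤ t) (hsing : HLL g (charX Dg y t) t = {y}) {U : Set (Euc n)}
    (hU : U ∈ 𝓝 (charX Dg y t)) :
    ∀ᶠ y' in 𝓝 y, ∃ x ∈ U, g y' ≤ HLu g x t ∧ IsMinOn (dist · y') {x | g y' ≤ HLu g x t} x := by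
  have hgc := continuous_of_hasGradientAt hg
  have hinner : 0 < ⟪Dg y, normalize (Dg y)⟫_ℝ := by
    rw [inner_eq_norm_mul_inner_normalize, real_inner_self_eq_norm_sq,
      norm_normalize_eq_one_iff.2 hy]
    simpa using hy
  have hdouble : Tendsto (fun h : ℝ => 2 * h) (𝓝[>] 0) (𝓝 0) := by
    have : Continuous fun h : ℝ => 2 * h := by fun_prop
    simpa using (this.tendsto 0).mono_left nhdsWithin_le_nhds
  obtain ⟨h, hlocal, hlt, hpos⟩ :=
    ((hdouble.eventually (eventually_forall_le_HLu_mem hg hy ht hU).curry_nhds).and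
      ((eventually_HLu_lt_HLu_add_smul hg hDg ht hsing hinner).and self_mem_nhdsWithin)).exists
  rw [← charX_add, ← (hsing.superset rfl : y ∈ HLL g _ t).2] at hlt
  filter_upwards [hlocal, ball_mem_nhds y hpos, hgc.continuousAt.eventually_lt_const hlt]
    with y' hy' hdist hlt'
  have hclosed : IsClosed {x | g y' ≤ HLu g x t} :=
    isClosed_le continuous_const (continuous_HLu hgc ht)
  obtain ⟨x, hx, hinf⟩ := hclosed.exists_infDist_eq_dist ⟨_, hlt'.le⟩ y'
  have hmin : IsMinOn (dist · y') {x | g y' ≤ HLu g x t} x := fun x' hx' => by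
    simpa only [Set.mem_ofPred_eq, dist_comm _ y', ← hinf] using infDist_le_dist_of_mem hx'
  refine ⟨x, hy' x ?_ hx, hx, hmin⟩
  calc dist x y' ≤ dist (charX Dg y (t + h)) y' := hmin hlt'.le
    _ ≤ dist (charX Dg y (t + h)) y + dist y y' := dist_triangle _ _ _
    _ ≤ t + h + h := add_le_add
      (mem_closedBall'.1 (mem_closedBall_charX hy (add_nonneg ht (le_of_lt hpos))))
      (mem_ball'.1 hdist).le
    _ = t + 2 * h := by ring

theorem sub_eq_smul_normalize_of_isMinOn_dist (hg : ∀ y, HasGradientAt g (Dg y) y)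
    (hDg : Continuous Dg) (ht : 0 ≤ t) (hz : Dg z ≠ 0) (hsing : HLL g x t = {z})
    (hx : c ≤ HLu g x t) (hmin : IsMinOn (dist · y) {x | c ≤ HLu g x t} x) :
    x - y = dist x y • normalize (Dg z) := by
  rw [dist_eq_norm]
  refine eq_norm_smul_normalize_of_inner_nonneg hz fun w hw => not_lt.1 fun hneg => ?_
  obtain ⟨k, hcloser, hlt⟩ := ((eventually_norm_add_smul_lt hneg).and
    (eventually_HLu_lt_HLu_add_smul hg hDg ht hsing hw)).exists
  have hle : dist x y ≤ dist (x + k • w) y := hmin (hx.trans hlt.le)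
  rw [dist_eq_norm, dist_eq_norm, add_sub_right_comm] at hle
  exact hcloser.not_ge hle

/- If `z` were the only minimizer at the closest point `x`, then `z` would lie on the segment from
`y` to `x` beyond `y`, so that `g y < g z = u(x, t)`; but `u = g y` at the closest point. -/
theorem HLL_nontrivial_of_isMinOn_dist (hg : ∀ y, HasGradientAt g (Dg y) y) (hDg : Continuous Dg)
    (ht : 0 ≤ t) {S : Set (Euc n)} (hS : Convex ℝ S) (hpos : ∀ a ∈ S, ∀ b ∈ S, 0 < ⟪Dg a, Dg b⟫_ℝ)
    (hy : y ∈ S) (hL : HLL g x t ⊆ S) (hmem : y ∉ HLL g (charX Dg y t) t)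
    (hx : g y ≤ HLu g x t) (hmin : IsMinOn (dist · y) {x | g y ≤ HLu g x t} x) :
    (HLL g x t).Nontrivial := by
  have hgc := continuous_of_hasGradientAt hg
  have hD : ∀ a ∈ S, Dg a ≠ 0 := fun a ha h => by simpa [h] using hpos a ha a ha
  by_contra hsub
  obtain ⟨z, hz⟩ := nonempty_HLL (x := x) hgc ht
  have hsing : HLL g x t = {z} := (Set.not_nontrivial_iff.1 hsub).eq_singleton_of_mem hz
  have hdist : t < dist x y := by
    refine not_le.1 fun hle => ?_
    have hyL := mem_HLL_of_le_HLu hgc (mem_closedBall'.2 hle) hx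
    exact hmem (eq_charX_of_mem_HLL hg (hD y hy) hyL ▸ hyL)
  have hval : HLu g x t = g y :=
    eq_of_isMinOn_dist_superlevel (f := (HLu g · t)) (continuous_HLu hgc ht).continuousAt hx hmin
      (dist_pos.1 (ht.trans_lt hdist))
  have hzy : y + (dist x y - t) • normalize (Dg z) = z := by
    have hcenter : x = z + t • normalize (Dg z) := eq_charX_of_mem_HLL hg (hD z (hL hz)) hz
    rw [sub_smul, ← sub_eq_smul_normalize_of_isMinOn_dist hg hDg ht (hD z (hL hz)) hsing hx hmin]
    nth_rw 1 [hcenter]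
    abel
  have hinner : ∀ p ∈ S, 0 < ⟪Dg p, normalize (Dg z)⟫_ℝ := fun p hp => by
    have hzp := hpos z (hL hz) p hp
    rw [inner_eq_norm_mul_inner_normalize, real_inner_comm] at hzp
    exact pos_of_mul_pos_right hzp (norm_nonneg _)
  have hlt := lt_add_smul_of_forall_inner_gradient_pos hS (fun p _ => hg p) (sub_pos.2 hdist) hy
    (hzy.symm ▸ hL hz) hinner
  rw [hzy, hz.2, hval] at hlt
  exact lt_irrefl _ hlt

theorem exists_ball_forall_inner_gradient_pos (hDg : Continuous Dg) (hy : Dg y ≠ 0) :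
    ∃ r > 0, ∀ a ∈ ball y r, ∀ b ∈ ball y r, 0 < ⟪Dg a, Dg b⟫_ℝ := by
  have hcont : Continuous fun q : Euc n × Euc n => ⟪Dg q.1, Dg q.2⟫_ℝ := by fun_prop
  obtain ⟨r, hr, hpos⟩ := eventually_nhds_iff_ball.1
    ((hcont.tendsto (y, y)).eventually_const_lt (real_inner_self_pos.2 hy))
  exact ⟨r, hr, fun a ha b hb => hpos (a, b) ((ball_prod_same y y r).subset ⟨ha, hb⟩)⟩

theorem exists_HLL_nontrivial_of_mem_closure (hg : ∀ y, HasGradientAt g (Dg y) y)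
    (hDg : Continuous Dg) (hy : Dg y ≠ 0) (ht : 0 ≤ t) (hsing : HLL g (charX Dg y t) t = {y})
    (hcl : y ∈ closure {y' | y' ∉ HLL g (charX Dg y' t) t ∧ c ≤ g y'}) {U V : Set (Euc n)}
    (hU : U ∈ 𝓝 (charX Dg y t)) (hV : V ∈ 𝓝 y) :
    ∃ x ∈ U, HLL g x t ⊆ V ∧ (HLL g x t).Nontrivial ∧ c ≤ HLu g x t := by
  obtain ⟨r, hr, hpos⟩ := exists_ball_forall_inner_gradient_pos hDg hy
  have hnear : ∀ᶠ x in 𝓝 (charX Dg y t), HLL g x t ⊆ interior (V ∩ ball y r) :=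
    eventually_HLL_subset (continuous_of_hasGradientAt hg) ht isOpen_interior <| by
      rw [hsing, Set.singleton_subset_iff, mem_interior_iff_mem_nhds]
      exact inter_mem hV (ball_mem_nhds y hr)
  obtain ⟨y', ⟨hmem, hc⟩, ⟨x, ⟨hxU, hxL⟩, hle, hmin⟩, hy'⟩ :=
    ((mem_closure_iff_frequently.1 hcl).and_eventually
      ((eventually_exists_isMinOn_dist hg hDg hy ht hsing (inter_mem hU hnear)).and
        (ball_mem_nhds y hr))).exists
  have hxL' : HLL g x t ⊆ V ∩ ball y r := hxL.trans interior_subset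
  exact ⟨x, hxU, fun _ h => (hxL' h).1, HLL_nontrivial_of_isMinOn_dist hg hDg ht (convex_ball y r)
    hpos hy' (fun _ h => (hxL' h).2) hmem hle hmin, hc.trans hle⟩

end ClosestPoint

/-! ### Descent points of a level -/

section DescentPoints

variable {n : ℕ} {g : Euc n → ℝ} {Dg : Euc n → Euc n} {x y : Euc n} {c t : ℝ}

/-- The noncritical points `y` of the superlevel set `{c ≤ g}` whose characteristic terminates
because the open balls `B(X(y, t), t)` eventually contain a point `z` with `g z ≤ c`; these balls
exhaust the half-space `{z | 0 < ⟪Dg y, z - y⟫}`. -/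
def descentPoints (g : Euc n → ℝ) (Dg : Euc n → Euc n) (c : ℝ) : Set (Euc n) :=
  {y | Dg y ≠ 0 ∧ c ≤ g y ∧ ∃ z, 0 < ⟪Dg y, z - y⟫_ℝ ∧ g z ≤ c}

theorem descentPoints_mem_nhdsWithin (hDg : Continuous Dg) (hy : y ∈ descentPoints g Dg c) :
    descentPoints g Dg c ∈ 𝓝[{p | c ≤ g p}] y := by
  obtain ⟨hD, -, z, hz, hgz⟩ := hy
  have hcont : Continuous fun p => ⟪Dg p, z - p⟫_ℝ := by fun_prop
  filter_upwards [self_mem_nhdsWithin,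
    mem_nhdsWithin_of_mem_nhds (hDg.continuousAt.eventually_ne hD),
    mem_nhdsWithin_of_mem_nhds (hcont.continuousAt.eventually_const_lt hz)] with p hpc hpD hpz
  exact ⟨hpD, hpc, z, hpz, hgz⟩

theorem connectedComponentIn_descentPoints_mem_nhdsWithin (hg : ∀ y, HasGradientAt g (Dg y) y)
    (hDg : Continuous Dg) (hy : y ∈ connectedComponentIn (descentPoints g Dg c) x) :
    connectedComponentIn (descentPoints g Dg c) x ∈ 𝓝[{p | c ≤ g p}] y := by
  have hyc : y ∈ descentPoints g Dg c := connectedComponentIn_subset _ _ hy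
  obtain ⟨O, hO, hsub⟩ :=
    mem_nhdsWithin_iff_exists_mem_nhds_inter.1 (descentPoints_mem_nhdsWithin hDg hyc)
  rw [connectedComponentIn_eq hy]
  filter_upwards [self_mem_nhdsWithin, mem_nhdsWithin_of_mem_nhds
    (eventually_joinedIn_superlevel hg hDg.continuousAt hyc.1 hyc.2.1 hO)] with y' hy' hjoined
  exact mem_connectedComponentIn_of_joinedIn ((hjoined hy').mono hsub)

theorem countable_components_descentPoints (hg : ∀ y, HasGradientAt g (Dg y) y)
    (hDg : Continuous Dg) (c : ℝ) :
    (connectedComponentIn (descentPoints g Dg c) '' descentPoints g Dg c).Countable :=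
  countable_connectedComponentIn_of_mem_nhdsWithin fun _ hy =>
    nhdsWithin_mono _ (fun _ hp => hp.2.1)
      (connectedComponentIn_descentPoints_mem_nhdsWithin hg hDg (mem_connectedComponentIn hy))

theorem exists_eventually_terminationTimes_le (hg : Continuous g) (hDg : Continuous Dg)
    (hy : y ∈ descentPoints g Dg c) :
    ∃ T, ∀ᶠ y' in 𝓝[{p | c ≤ g p}] y, ∃ s ∈ terminationTimes g Dg y', s ≤ T := by
  obtain ⟨hD, -, z, hz, hgz⟩ := hy
  obtain ⟨T, hT, hzT⟩ := exists_mem_ball_charX hD hz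
  have hcont : ContinuousAt (fun y' => charX Dg y' T) y :=
    ContinuousAt.comp (f := fun y' => (y', T)) (continuousAt_charX hDg hD) (by fun_prop)
  have hzy : y ≠ z := by
    rintro rfl
    simp at hz
  have hnear : ∀ᶠ y' in 𝓝 y, charX Dg y' T ∈ ball z T :=
    hcont.preimage_mem_nhds (isOpen_ball.mem_nhds (mem_ball_comm.1 hzT))
  refine ⟨T, ?_⟩
  filter_upwards [self_mem_nhdsWithin,
    mem_nhdsWithin_of_mem_nhds (hDg.continuousAt.eventually_ne hD),
    mem_nhdsWithin_of_mem_nhds (isOpen_ne.mem_nhds hzy), mem_nhdsWithin_of_mem_nhds hnear]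
    with y' hcy' hD' hne hball
  refine exists_mem_terminationTimes_le hg hDg hD' hT.le fun hsing => hne ?_
  have hz' : z ∈ closedBall (charX Dg y' T) T := ball_subset_closedBall (mem_ball_comm.1 hball)
  have hle : g z ≤ HLu g (charX Dg y' T) T := by
    rw [← (hsing.superset rfl : y' ∈ HLL g _ T).2]
    exact hgz.trans hcy'
  exact (hsing.subset (mem_HLL_of_le_HLu hg hz' hle)).symm

theorem nonempty_terminationTimes_of_mem_descentPoints (hg : Continuous g) (hDg : Continuous Dg)
    (hy : y ∈ descentPoints g Dg c) : (terminationTimes g Dg y).Nonempty := by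
  obtain ⟨T, hT⟩ := exists_eventually_terminationTimes_le hg hDg hy
  obtain ⟨s, hs, -⟩ := hT.self_of_nhdsWithin hy.2.1
  exact ⟨s, hs⟩

/- If no `w` ahead of `y` has `g w < g y`, then any competing minimizer `z` is a local minimum
of `g` at height `g y`. -/
theorem exists_mem_descentPoints_of_mem_terminationTimes (hg : Continuous g) (hy : Dg y ≠ 0)
    (ht : t ∈ terminationTimes g Dg y) :
    ∃ c ∈ Set.range ((↑) : ℚ → ℝ) ∪ {c | ∃ z, IsLocalMin g z ∧ g z = c},
      y ∈ descentPoints g Dg c := by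
  by_cases hlower : ∃ w, 0 < ⟪Dg y, w - y⟫_ℝ ∧ g w < g y
  · obtain ⟨w, hw, hgw⟩ := hlower
    obtain ⟨q, hwq, hqy⟩ := exists_rat_btwn hgw
    exact ⟨q, Or.inl ⟨q, rfl⟩, hy, hqy.le, w, hw, hwq.le⟩
  push Not at hlower
  have hpos : 0 ≤ t + 1 := by linarith [ht.1]
  obtain ⟨z, hz, hne⟩ : ∃ z ∈ HLL g (charX Dg y (t + 1)) (t + 1), z ≠ y := by
    by_contra! hall
    exact ht.2.2 _ (lt_add_one t)
      (Set.eq_singleton_iff_nonempty_unique_mem.2 ⟨nonempty_HLL hg hpos, hall⟩)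
  have hzy := inner_gradient_pos_of_mem_closedBall_charX hy (mem_HLL_iff.1 hz).1 hne
  have hval : g z = g y :=
    (hz.2.trans_le (HLu_le hg (mem_closedBall_charX hy hpos))).antisymm (hlower z hzy)
  have hcont : Continuous fun w => ⟪Dg y, w - y⟫_ℝ := by fun_prop
  have hmin : IsLocalMin g z := by
    filter_upwards [hcont.continuousAt.eventually_const_lt hzy] with w hw
    exact hval.trans_le (hlower w hw)
  exact ⟨g y, Or.inr ⟨z, hmin, hval⟩, hy, le_rfl, z, hzy, hval.le⟩

end DescentPoints

/-! ### Almost connectedness of the termination points over a component -/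

section TerminationPoints

variable {n : ℕ} {g : Euc n → ℝ} {Dg : Euc n → Euc n} {N : Set (Euc n)} {y : Euc n} {c s t : ℝ}
  {A B : Set (Euc n × ℝ)}

theorem charCurve_mem_closure_terminationPoints_of_not_mem_HLL
    (hg : ∀ y, HasGradientAt g (Dg y) y) (hDg : Continuous Dg) (hN : N ⊆ descentPoints g Dg c)
    (hloc : ∀ y ∈ N, N ∈ 𝓝[{p | c ≤ g p}] y) (hy : y ∈ N) (ht : 0 ≤ t)
    (hsing : HLL g (charX Dg y t) t = {y})
    (hcl : y ∈ closure {y' | y' ∉ HLL g (charX Dg y' t) t ∧ c ≤ g y'}) :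
    charCurve Dg y t ∈ closure (terminationPoints g Dg N) := by
  obtain ⟨V, hV, hVN⟩ := mem_nhdsWithin_iff_exists_mem_nhds_inter.1 (hloc y hy)
  refine mem_closure_iff_nhds.2 fun W hW => ?_
  obtain ⟨x, hxW, hxV, hnontriv, hcx⟩ := exists_HLL_nontrivial_of_mem_closure hg hDg (hN hy).1 ht
    hsing hcl ((by fun_prop : Continuous fun x => (x, t)).continuousAt.preimage_mem_nhds hW) hV
  obtain ⟨z, hz, z', hz', hne⟩ := hnontriv
  have hzN : z ∈ N := hVN ⟨hxV hz, hcx.trans_eq hz.2.symm⟩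
  refine ⟨(x, t), hxW, z, hzN, t,
    mem_terminationTimes_of_mem_HLL hg (hN hzN).1 hz hz' hne.symm, ?_⟩
  rw [charCurve, ← eq_charX_of_mem_HLL hg (hN hzN).1 hz]

theorem charCurve_mem_closure_terminationPoints (hg : ∀ y, HasGradientAt g (Dg y) y)
    (hDg : Continuous Dg) (hN : N ⊆ descentPoints g Dg c)
    (hloc : ∀ y ∈ N, N ∈ 𝓝[{p | c ≤ g p}] y) (hy : y ∈ N) (ht : 0 ≤ t)
    (hmem : y ∈ HLL g (charX Dg y t) t)
    (hcl : y ∈ closure {y' ∈ N | ∃ s ∈ terminationTimes g Dg y', s ≤ t}) :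
    charCurve Dg y t ∈ closure (terminationPoints g Dg N) := by
  have hgc := continuous_of_hasGradientAt hg
  have hD := (hN hy).1
  by_cases hsing : HLL g (charX Dg y t) t = {y}
  swap
  · exact subset_closure ⟨y, hy, t, mem_terminationTimes_of_ne_singleton hgc hD ht hmem hsing, rfl⟩
  have hcont : ContinuousAt (charCurve Dg · t) y :=
    ContinuousAt.comp (f := fun y' => (y', t)) (continuousAt_uncurry_charCurve hDg hD) (by fun_prop)
  have hsplit : {y' ∈ N | ∃ s ∈ terminationTimes g Dg y', s ≤ t} ⊆
      {y' ∈ N | t ∈ terminationTimes g Dg y'} ∪ {y' | y' ∉ HLL g (charX Dg y' t) t ∧ c ≤ g y'} := by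
    rintro y' ⟨hy', s, hs, hst⟩
    by_cases hmem' : y' ∈ HLL g (charX Dg y' t) t
    · exact Or.inl ⟨hy', mem_terminationTimes_of_le hgc (hN hy').1 hs hst le_rfl hmem'⟩
    · exact Or.inr ⟨hmem', (hN hy').2.1⟩
  have hcl' := closure_mono hsplit hcl
  rw [closure_union] at hcl'
  rcases hcl' with hterm | hnotmem
  · refine closure_mono ?_ (mem_closure_image (f := (charCurve Dg · t)) hcont hterm)
    exact Set.image_subset_iff.2 fun y' hy' => ⟨y', hy'.1, t, hy'.2, rfl⟩
  · exact charCurve_mem_closure_terminationPoints_of_not_mem_HLL hg hDg hN hloc hy ht hsing hnotmem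

theorem charCurve_mem_closure_of_mem_closure (hg : Continuous g)
    (hAB : A ∪ B = terminationPoints g Dg N) (hdisj : Disjoint (closure A) (closure B)) (hy : y ∈ N)
    (hD : Dg y ≠ 0) (hs : s ∈ terminationTimes g Dg y)
    (hsA : charCurve Dg y s ∈ closure A) (ht : t ∈ terminationTimes g Dg y) :
    charCurve Dg y t ∈ closure A := by
  have hconn : IsPreconnected (charCurve Dg y '' terminationTimes g Dg y) :=
    (ordConnected_terminationTimes hg hD).isPreconnected.image _ continuous_charCurve.continuousOn
  refine isPreconnected_subset_left_of_isClosed hconn isClosed_closure isClosed_closure hdisj ?_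
    ⟨_, ⟨s, hs, rfl⟩, hsA⟩ ⟨t, ht, rfl⟩
  rintro _ ⟨r, hr, rfl⟩
  rw [← closure_union, hAB]
  exact subset_closure ⟨y, hy, r, hr, rfl⟩

theorem exists_limit_terminationTime (hg : Continuous g) (hDg : Continuous Dg)
    (hN : N ⊆ descentPoints g Dg c) (hy : y ∈ N) (hAB : A ∪ B = terminationPoints g Dg N)
    (hdisj : Disjoint (closure A) (closure B))
    (hcl : y ∈ closure {y' ∈ N | ∃ t ∈ terminationTimes g Dg y', charCurve Dg y' t ∈ A}) :
    ∃ s, 0 ≤ s ∧ (y, s) ∈ closure {q : Euc n × ℝ | q.1 ∈ N ∧ q.2 ∈ terminationTimes g Dg q.1} ∧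
      charCurve Dg y s ∈ closure A := by
  obtain ⟨T, hT⟩ := exists_eventually_terminationTimes_le hg hDg (hN hy)
  set Q : Set (Euc n × ℝ) := {q | q.1 ∈ N ∧ q.2 ∈ terminationTimes g Dg q.1 ∧ q.2 ≤ T ∧
    charCurve Dg q.1 q.2 ∈ closure A}
  have hfst : y ∈ closure (Prod.fst '' Q) := by
    refine mem_closure_iff_frequently.2 (((mem_closure_iff_frequently.1 hcl).and_eventually
      (eventually_nhdsWithin_iff.1 hT)).mono ?_)
    rintro y' ⟨⟨hy', t, ht, htA⟩, hT'⟩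
    obtain ⟨s, hs, hsT⟩ := hT' (hN hy').2.1
    exact ⟨(y', s), ⟨hy', hs, hsT, charCurve_mem_closure_of_mem_closure hg hAB hdisj hy'
      (hN hy').1 ht (subset_closure htA) hs⟩, rfl⟩
  have hIcc : ∀ q ∈ Q, q.2 ∈ Set.Icc 0 T := fun q hq => ⟨hq.2.1.1, hq.2.2.1⟩
  obtain ⟨s, hs, hsQ⟩ := exists_mem_closure_of_mem_closure_image_fst isCompact_Icc hIcc hfst
  have hQ : Q ⊆ {q | q.1 ∈ N ∧ q.2 ∈ terminationTimes g Dg q.1} := fun q hq => ⟨hq.1, hq.2.1⟩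
  refine ⟨s, hs.1, closure_mono hQ hsQ, ?_⟩
  refine closure_minimal ?_ isClosed_closure (mem_closure_image
    (f := Function.uncurry (charCurve Dg)) (continuousAt_uncurry_charCurve hDg (hN hy).1) hsQ)
  exact Set.image_subset_iff.2 fun q hq => hq.2.2.2

theorem charCurve_mem_closure_left (hg : ∀ y, HasGradientAt g (Dg y) y)
    (hDg : Continuous Dg) (hN : N ⊆ descentPoints g Dg c)
    (hloc : ∀ y ∈ N, N ∈ 𝓝[{p | c ≤ g p}] y) (hAB : A ∪ B = terminationPoints g Dg N)
    (hdisj : Disjoint (closure A) (closure B)) (hy : y ∈ N)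
    (hcl : y ∈ closure {y' ∈ N | ∃ t ∈ terminationTimes g Dg y', charCurve Dg y' t ∈ A})
    (ht : t ∈ terminationTimes g Dg y) : charCurve Dg y t ∈ closure A := by
  have hgc := continuous_of_hasGradientAt hg
  have hD := (hN hy).1
  obtain ⟨s, hs, hscl, hsA⟩ := exists_limit_terminationTime hgc hDg hN hy hAB hdisj hcl
  rcases le_or_gt t s with hts | hst
  · have hmem : y ∈ HLL g (charX Dg y s) s := by
      refine mem_HLL_charX_of_mem_closure hgc hDg hD (closure_mono ?_ hscl)
      exact fun q hq => ⟨hq.2.1, hq.2.2.1⟩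
    exact charCurve_mem_closure_of_mem_closure hgc hAB hdisj hy hD
      (mem_terminationTimes_of_le hgc hD ht hts le_rfl hmem) hsA ht
  have hconn : IsPreconnected (charCurve Dg y '' Set.Icc s t) :=
    isPreconnected_Icc.image _ continuous_charCurve.continuousOn
  refine isPreconnected_subset_left_of_isClosed hconn isClosed_closure isClosed_closure hdisj ?_
    ⟨_, ⟨s, ⟨le_rfl, hst.le⟩, rfl⟩, hsA⟩ ⟨t, ⟨hst.le, le_rfl⟩, rfl⟩
  rintro _ ⟨r, ⟨hsr, hrt⟩, rfl⟩
  rcases hsr.eq_or_lt with rfl | hsr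
  · exact Or.inl hsA
  have hr : 0 ≤ r := hs.trans hsr.le
  have hearlier : y ∈ closure {y' ∈ N | ∃ s ∈ terminationTimes g Dg y', s ≤ r} := by
    refine closure_mono ?_ (mem_closure_image continuousAt_fst
      ((isOpen_lt continuous_snd continuous_const).closure_inter ⟨hscl, hsr⟩))
    rintro _ ⟨q, ⟨⟨hqN, hq⟩, hqr⟩, rfl⟩
    exact ⟨hqN, q.2, hq, le_of_lt hqr⟩
  rw [← closure_union, hAB]
  exact charCurve_mem_closure_terminationPoints hg hDg hN hloc hy hr
    (mem_HLL_charX_of_le hgc hD hr hrt ht.2.1) hearlier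

theorem almostConnected_terminationPoints (hg : ∀ y, HasGradientAt g (Dg y) y)
    (hDg : Continuous Dg) (hN : N ⊆ descentPoints g Dg c)
    (hloc : ∀ y ∈ N, N ∈ 𝓝[{p | c ≤ g p}] y) (hconn : IsPreconnected N) :
    AlmostConnected (terminationPoints g Dg N) := by
  have hgc := continuous_of_hasGradientAt hg
  rw [almostConnected_iff_forall_exists_dist_lt]
  intro A B hA hB hAB ε hε
  by_contra! hsep
  have hdisj := disjoint_closure_of_forall_le_dist hε hsep
  let feet (C : Set (Euc n × ℝ)) : Set (Euc n) :=
    {y ∈ N | ∃ t ∈ terminationTimes g Dg y, charCurve Dg y t ∈ C}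
  have hcover : N ⊆ closure (feet A) ∪ closure (feet B) := fun y hy => by
    obtain ⟨t, ht⟩ := nonempty_terminationTimes_of_mem_descentPoints hgc hDg (hN hy)
    exact (hAB.superset ⟨y, hy, t, ht, rfl⟩).imp
      (fun h => subset_closure ⟨hy, t, ht, h⟩) (fun h => subset_closure ⟨hy, t, ht, h⟩)
  have hfeet : ∀ C ⊆ A ∪ B, C.Nonempty → (N ∩ closure (feet C)).Nonempty := by
    rintro C hC ⟨p, hp⟩
    obtain ⟨y, hy, t, ht, rfl⟩ := hAB.subset (hC hp)
    exact ⟨y, hy, subset_closure ⟨hy, t, ht, hp⟩⟩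
  obtain ⟨y, hy, hyA, hyB⟩ := isPreconnected_closed_iff.1 hconn _ _ isClosed_closure
    isClosed_closure hcover (hfeet A Set.subset_union_left hA)
    (hfeet B Set.subset_union_right hB)
  obtain ⟨t, ht⟩ := nonempty_terminationTimes_of_mem_descentPoints hgc hDg (hN hy)
  exact Set.disjoint_left.1 hdisj
    (charCurve_mem_closure_left hg hDg hN hloc hAB hdisj hy hyA ht)
    (charCurve_mem_closure_left hg hDg hN hloc (by rwa [Set.union_comm]) hdisj.symm hy hyB ht)

end TerminationPoints

section PositiveTimes

variable {n : ℕ} {g : Euc n → ℝ} {Dg : Euc n → Euc n} {N : Set (Euc n)} {y : Euc n} {c t δ : ℝ}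

theorem eventually_not_mem_HLL_charX (hg : Continuous g) (hDg : Continuous Dg) (hy : Dg y ≠ 0)
    (ht : 0 ≤ t) (hnot : y ∉ HLL g (charX Dg y t) t) :
    ∀ᶠ y' in 𝓝 y, y' ∉ HLL g (charX Dg y' t) t := by
  refine not_frequently.1 fun hfreq => hnot (mem_HLL_charX_of_mem_closure hg hDg hy ?_)
  have hcl := mem_closure_iff_frequently.2 (hfreq.mono fun y' hy' => And.intro ht hy')
  exact map_mem_closure (f := fun y' => (y', t)) (by fun_prop) hcl fun _ h => h

/- The minimizers `z` over the balls `B(y + 2sν, s)`, with `ν` the direction of `Dg y`, tend to `y`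
and stay in `{c ≤ g}`, and their characteristics live at least until time `s`. -/
theorem exists_pos_mem_terminationTimes_lt (hg : ∀ y, HasGradientAt g (Dg y) y)
    (hDg : Continuous Dg) (hN : N ⊆ descentPoints g Dg c) (hNy : N ∈ 𝓝[{p | c ≤ g p}] y)
    (hy : y ∈ N) (hnot : ∀ s > 0, y ∉ HLL g (charX Dg y s) s) (hδ : 0 < δ)
    {V : Set (Euc n)} (hV : V ∈ 𝓝 y) :
    ∃ z ∈ N ∩ V, ∃ t ∈ terminationTimes g Dg z, 0 < t ∧ t < δ := by
  have hgc := continuous_of_hasGradientAt hg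
  obtain ⟨U, hU, hUN⟩ := mem_nhdsWithin_iff_exists_mem_nhds_inter.1 hNy
  obtain ⟨r, hr, hrδ⟩ := exists_between hδ
  have hnear := inter_mem (inter_mem hU hV)
    (eventually_not_mem_HLL_charX hgc hDg (hN hy).1 hr.le (hnot r hr))
  obtain ⟨s, ⟨hball, hsr⟩, hlt, hs⟩ :=
    ((((eventually_closedBall_add_smul_subset hnear (normalize (Dg y))).and
      (Iio_mem_nhds hr)).filter_mono nhdsWithin_le_nhds).and
      ((eventually_forall_mem_closedBall_lt (hg y) (hN hy).1).and self_mem_nhdsWithin)).exists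
  obtain ⟨z, hz⟩ := nonempty_HLL (x := y + (2 * s) • normalize (Dg y)) hgc (le_of_lt hs)
  have hzball := (mem_HLL_iff.1 hz).1
  obtain ⟨⟨hzU, hzV⟩, hznot⟩ := hball hzball
  have hzN : z ∈ N := hUN ⟨hzU, (hN hy).2.1.trans (hlt z hzball).le⟩
  have hD := (hN hzN).1
  have hmem : z ∈ HLL g (charX Dg z s) s := eq_charX_of_mem_HLL hg hD hz ▸ hz
  obtain ⟨j, hj⟩ := nonempty_terminationTimes_of_mem_descentPoints hgc hDg (hN hzN)
  have hjr : j < r := not_le.1 fun hrj =>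
    hznot (mem_HLL_charX_of_le hgc hD hr.le hrj hj.2.1)
  have hmax : z ∈ HLL g (charX Dg z (max j s)) (max j s) := by
    rcases max_choice j s with h | h <;> rw [h]
    exacts [hj.2.1, hmem]
  exact ⟨z, ⟨hzN, hzV⟩, max j s, mem_terminationTimes_of_le hgc hD hj (le_max_left _ _) le_rfl hmax,
    lt_max_of_lt_right hs, max_lt (hjr.trans hrδ) (lt_trans hsr hrδ)⟩

theorem charCurve_zero_mem_closure (hg : ∀ y, HasGradientAt g (Dg y) y) (hDg : Continuous Dg)
    (hN : N ⊆ descentPoints g Dg c) (hNy : N ∈ 𝓝[{p | c ≤ g p}] y) (hy : y ∈ N)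
    (h0 : 0 ∈ terminationTimes g Dg y) :
    charCurve Dg y 0 ∈ closure (terminationPoints g Dg N ∩ {p | 0 < p.2}) := by
  have hgc := continuous_of_hasGradientAt hg
  have hD := (hN hy).1
  by_cases hlive : ∃ r > 0, y ∈ HLL g (charX Dg y r) r
  · obtain ⟨r, hr, hmem⟩ := hlive
    refine mem_closure_of_tendsto (b := 𝓝[>] (0 : ℝ))
      ((continuous_charCurve.tendsto 0).mono_left nhdsWithin_le_nhds) ?_
    filter_upwards [self_mem_nhdsWithin, nhdsWithin_le_nhds (Iio_mem_nhds hr)] with s hs hsr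
    exact ⟨⟨y, hy, s,
      mem_terminationTimes_of_le hgc hD h0 (le_of_lt hs) (le_of_lt hsr) hmem, rfl⟩, hs⟩
  push Not at hlive
  refine mem_closure_iff_nhds.2 fun W hW => ?_
  obtain ⟨V, hV, I, hI, hVI⟩ := mem_nhds_prod_iff.1
    ((continuousAt_uncurry_charCurve (t := 0) hDg hD).preimage_mem_nhds hW)
  obtain ⟨δ, hδ, hδI⟩ := Metric.mem_nhds_iff.1 hI
  obtain ⟨z, ⟨hzN, hzV⟩, t, ht, ht0, htδ⟩ :=
    exists_pos_mem_terminationTimes_lt hg hDg hN hNy hy hlive hδ hV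
  have htI : t ∈ I := hδI (by simpa [abs_of_pos ht0] using htδ)
  exact ⟨charCurve Dg z t, hVI (Set.mk_mem_prod hzV htI), ⟨z, hzN, t, ht, rfl⟩, ht0⟩

theorem almostConnected_terminationPoints_component (hg : ∀ y, HasGradientAt g (Dg y) y)
    (hDg : Continuous Dg) (c : ℝ) (x : Euc n) :
    AlmostConnected
      (terminationPoints g Dg (connectedComponentIn (descentPoints g Dg c) x) ∩ {p | 0 < p.2}) := by
  have hN := connectedComponentIn_subset (descentPoints g Dg c) x
  have hloc : ∀ y ∈ connectedComponentIn (descentPoints g Dg c) x,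
      connectedComponentIn (descentPoints g Dg c) x ∈ 𝓝[{p | c ≤ g p}] y := fun y hy =>
    connectedComponentIn_descentPoints_mem_nhdsWithin hg hDg hy
  refine (almostConnected_terminationPoints hg hDg hN hloc
    isPreconnected_connectedComponentIn).of_subset_closure Set.inter_subset_left ?_
  rintro _ ⟨y, hy, t, ht, rfl⟩
  rcases ht.1.eq_or_lt with rfl | hpos
  · exact charCurve_zero_mem_closure hg hDg hN (hloc y hy) hy ht
  · exact subset_closure ⟨⟨y, hy, t, ht, rfl⟩, hpos⟩

end PositiveTimes

/-! ### The countable cover -/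

section Cover

variable {n : ℕ} {g : Euc n → ℝ} {Dg : Euc n → Euc n}

/-- The countable family of base sets whose termination points make up `T(M)`: the components of
`descentPoints g Dg c`, where `c` is rational or a local minimum value of `g`. -/
def descentComponents (g : Euc n → ℝ) (Dg : Euc n → Euc n) : Set (Set (Euc n)) :=
  ⋃ c ∈ Set.range ((↑) : ℚ → ℝ) ∪ {c | ∃ z, IsLocalMin g z ∧ g z = c},
    connectedComponentIn (descentPoints g Dg c) '' descentPoints g Dg c

theorem countable_descentComponents (hg : ∀ y, HasGradientAt g (Dg y) y) (hDg : Continuous Dg) :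
    (descentComponents g Dg).Countable :=
  ((Set.countable_range _).union (countable_localMin_values g)).biUnion fun c _ =>
    countable_components_descentPoints hg hDg c

theorem almostConnected_of_mem_descentComponents (hg : ∀ y, HasGradientAt g (Dg y) y)
    (hDg : Continuous Dg) {N : Set (Euc n)} (hN : N ∈ descentComponents g Dg) :
    AlmostConnected (terminationPoints g Dg N ∩ {p | 0 < p.2}) := by
  obtain ⟨c, -, x, -, rfl⟩ := Set.mem_iUnion₂.1 hN
  exact almostConnected_terminationPoints_component hg hDg c x

theorem sUnion_terminationPoints_descentComponents (hg : Continuous g) (hDg : Continuous Dg) :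
    ⋃₀ ((fun N => terminationPoints g Dg N ∩ {p | 0 < p.2}) '' descentComponents g Dg) =
      TM g Dg := by
  rw [TM_eq_terminationPoints hg hDg, Set.sUnion_image]
  ext p
  simp only [Set.mem_iUnion₂]
  constructor
  · rintro ⟨N, hN, ⟨y, hy, ht⟩, hp⟩
    obtain ⟨c, -, x, -, rfl⟩ := Set.mem_iUnion₂.1 hN
    exact ⟨⟨y, (connectedComponentIn_subset _ _ hy).1, ht⟩, hp⟩
  · rintro ⟨⟨y, hy, t, ht, rfl⟩, hp⟩
    obtain ⟨c, hc, hyc⟩ := exists_mem_descentPoints_of_mem_terminationTimes hg hy ht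
    exact ⟨connectedComponentIn (descentPoints g Dg c) y, Set.mem_iUnion₂.2 ⟨c, hc, y, hyc, rfl⟩,
      ⟨y, mem_connectedComponentIn hyc, t, ht, rfl⟩, hp⟩

end Cover

end HopfLax

theorem SigmaUnionT1_countable_components {n : ℕ} (hn : 0 < n) (g : Euc n → ℝ) (Dg : Euc n → Euc n)
    (hg : ∀ y, HasGradientAt g (Dg y) y) (hDg : Continuous Dg) :
    ∃ 𝒮 : Set (Set (Euc n × ℝ)), 𝒮.Countable ∧ (∀ C ∈ 𝒮, C.Nonempty) ∧
      𝒮.PairwiseDisjoint id ∧ (∀ C ∈ 𝒮, IsConnected C ∨ AlmostConnected C) ∧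
      ⋃₀ 𝒮 = SigmaSet g ∪ T1 g Dg := by
  obtain ⟨𝒮, hcount, hne, hdisj, hconn, hunion⟩ := exists_countable_almostConnected_partition
    ((HopfLax.countable_descentComponents hg hDg).image
      fun N => HopfLax.terminationPoints g Dg N ∩ {p | 0 < p.2})
    (Set.forall_mem_image.2 fun _ hN => HopfLax.almostConnected_of_mem_descentComponents hg hDg hN)
  refine ⟨𝒮, hcount, hne, hdisj, fun C hC => Or.inr (hconn C hC), ?_⟩
  rw [hunion, HopfLax.SigmaSet_union_T1_eq_TM hg hDg]
  exact HopfLax.sUnion_terminationPoints_descentComponents (continuous_of_hasGradientAt hg) hDg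
end
end

section
/- Let Ω = (ℝⁿ × (0,∞)) ∖ Σ. Then u is Fréchet differentiable at every point of Ω and the derivative map (x,t) ↦ Du(x,t) is continuous on Ω (continuous as a map from Ω with the subspace topology to ℝⁿ⁺¹); i.e., u is C¹ on the complement of its set of nondifferentiable points. -/
open scoped InnerProductSpace Topology ENNReal
open Filter

noncomputable section

/-!
Rescaling the ball writes `u(x,t)` as the minimum of `g (x + t v)` over the compact unit ball, a
parameter set that does not depend on `(x,t)`. The rest is Danskin's envelope principle: for any
minimizer `v`, the `C¹` function `(x,t) ↦ g (x + t v)` touches `u` from above, so wherever `u` is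
differentiable its derivative is the one of this function. Minimizers depend upper semicontinuously
on the point, and at a point of differentiability they all give the same derivative, which is
therefore the limit of the derivatives of `u` at nearby points of differentiability.
-/

lemma eventually_forall_eq_sInf_imp {Y V : Type*} [TopologicalSpace Y] [TopologicalSpace V]
    {f : Y → V → ℝ} {K : Set V} (hK : IsCompact K) (hf : Continuous ↿f) {x : Y}
    {P : Y → V → Prop}
    (hP : ∀ v ∈ K, sInf (f x '' K) = f x v → ∀ᶠ z : Y × V in 𝓝 (x, v), P z.1 z.2) :
    ∀ᶠ y in 𝓝 x, ∀ v ∈ K, sInf (f y '' K) = f y v → P y v := by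
  refine hK.eventually_forall_of_forall_eventually fun v hv => ?_
  by_cases hmin : sInf (f x '' K) = f x v
  · exact (hP v hv hmin).mono fun _ hz _ => hz
  · have hcont : Continuous fun z : Y × V => sInf (f z.1 '' K) :=
      (hK.continuous_sInf hf).comp continuous_fst
    filter_upwards [(isOpen_ne_fun hcont hf).mem_nhds hmin] with z hz heq
    exact absurd heq hz

section Envelope

variable {X V : Type*} [NormedAddCommGroup X] [NormedSpace ℝ X]

lemma hasFDerivAt_eq_of_eventuallyLE {f h : X → ℝ} {f' h' : X →L[ℝ] ℝ} {x : X}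
    (hf : HasFDerivAt f f' x) (hh : HasFDerivAt h h' x) (hle : f ≤ᶠ[𝓝 x] h) (heq : f x = h x) :
    f' = h' := by
  have hmin : IsLocalMin (h - f) x := by
    filter_upwards [hle] with y hy
    simpa [heq] using hy
  exact (sub_eq_zero.1 (hmin.hasFDerivAt_eq_zero (hh.sub hf))).symm

lemma fderiv_sInf_image_eq_of_eq_sInf {f : X → V → ℝ} {K : Set V} {x : X} {v : V}
    {f' : X →L[ℝ] ℝ} (hbdd : ∀ᶠ y in 𝓝 x, BddBelow (f y '' K))
    (hdiff : DifferentiableAt ℝ (fun y => sInf (f y '' K)) x)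
    (hf : HasFDerivAt (fun y => f y v) f' x) (hv : v ∈ K) (hmin : sInf (f x '' K) = f x v) :
    fderiv ℝ (fun y => sInf (f y '' K)) x = f' := by
  refine hasFDerivAt_eq_of_eventuallyLE hdiff.hasFDerivAt hf ?_ hmin
  filter_upwards [hbdd] with y hy
  exact csInf_le hy (Set.mem_image_of_mem _ hv)

theorem continuousOn_fderiv_sInf_image [TopologicalSpace V] {f : X → V → ℝ}
    {f' : X → V → X →L[ℝ] ℝ} {K : Set V} (hK : IsCompact K) (hne : K.Nonempty)
    (hf : Continuous ↿f) (hf' : Continuous ↿f')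
    (hderiv : ∀ x, ∀ v ∈ K, HasFDerivAt (fun y => f y v) (f' x v) x) :
    ContinuousOn (fderiv ℝ fun x => sInf (f x '' K))
      {x | DifferentiableAt ℝ (fun x => sInf (f x '' K)) x} := by
  have hfx (x : X) : Continuous (f x) := hf.comp (.prodMk_right x)
  have hbdd (x : X) : BddBelow (f x '' K) := (hK.image (hfx x)).bddBelow
  have fderiv_eq {x : X} (hx : DifferentiableAt ℝ (fun x => sInf (f x '' K)) x) {v : V}
      (hv : v ∈ K) (hmin : sInf (f x '' K) = f x v) :
      fderiv ℝ (fun x => sInf (f x '' K)) x = f' x v :=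
    fderiv_sInf_image_eq_of_eq_sInf (.of_forall hbdd) hx (hderiv x v hv) hv hmin
  intro x hx U hU
  have hnear : ∀ᶠ y in 𝓝 x, ∀ v ∈ K, sInf (f y '' K) = f y v → f' y v ∈ U := by
    refine eventually_forall_eq_sInf_imp hK hf fun v hv hmin => ?_
    rw [fderiv_eq hx hv hmin] at hU
    exact hf'.continuousAt.eventually hU
  rw [mem_map]
  filter_upwards [nhdsWithin_le_nhds hnear, self_mem_nhdsWithin] with y hy hydiff
  obtain ⟨v, hv, hmin⟩ := hK.exists_sInf_image_eq hne (hfx y).continuousOn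
  rw [Set.mem_preimage, fderiv_eq hydiff hv hmin]
  exact hy v hv hmin

end Envelope

section BallMinimum

variable {E : Type*} [NormedAddCommGroup E] [NormedSpace ℝ E]

lemma image_closedBall_eq_image_unitClosedBall {α : Type*} (g : E → α) (x : E) {t : ℝ}
    (ht : 0 ≤ t) :
    g '' Metric.closedBall x t = (fun v => g (x + t • v)) '' Metric.closedBall 0 1 := by
  rw [← affinity_unitClosedBall ht x, ← Set.image_smul, ← Set.image_vadd, Set.image_image,
    Set.image_image]
  rfl

lemma hasFDerivAt_fst_add_snd_smul (v : E) (q : E × ℝ) :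
    HasFDerivAt (fun q : E × ℝ => q.1 + q.2 • v)
      (.fst ℝ E ℝ + (ContinuousLinearMap.snd ℝ E ℝ).smulRight v) q :=
  hasFDerivAt_fst.add (hasFDerivAt_snd.smul_const v)

lemma continuousOn_fderiv_sInf_image_unitClosedBall [ProperSpace E] {g : E → ℝ}
    (hg : ContDiff ℝ 1 g) :
    ContinuousOn
      (fderiv ℝ fun q : E × ℝ => sInf ((fun v => g (q.1 + q.2 • v)) '' Metric.closedBall 0 1))
      {q | DifferentiableAt ℝ
        (fun q : E × ℝ => sInf ((fun v => g (q.1 + q.2 • v)) '' Metric.closedBall 0 1)) q} := by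
  obtain ⟨g', hg'cont, hg'⟩ := contDiff_one_iff_hasFDerivAt.1 hg
  let A (v : E) : E × ℝ →L[ℝ] E := .fst ℝ E ℝ + (ContinuousLinearMap.snd ℝ E ℝ).smulRight v
  have hA : Continuous A :=
    continuous_const.add
      (ContinuousLinearMap.smulRightL ℝ (E × ℝ) E (.snd ℝ E ℝ)).continuous
  have hpoint : Continuous fun z : (E × ℝ) × E => z.1.1 + z.1.2 • z.2 := by fun_prop
  have hderiv (q : E × ℝ) (v : E) :
      HasFDerivAt (fun q : E × ℝ => g (q.1 + q.2 • v)) ((g' (q.1 + q.2 • v)).comp (A v)) q :=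
    (hg' _).comp q (hasFDerivAt_fst_add_snd_smul v q)
  exact continuousOn_fderiv_sInf_image (isCompact_closedBall 0 1)
    (Metric.nonempty_closedBall.2 zero_le_one) (hg.continuous.comp hpoint)
    ((hg'cont.comp hpoint).clm_comp (hA.comp continuous_snd)) fun q v _ => hderiv q v

theorem C1_regularity_off_Sigma_general [ProperSpace E] {g : E → ℝ} (hg : ContDiff ℝ 1 g) :
    ContinuousOn (fderiv ℝ fun q : E × ℝ => sInf (g '' Metric.closedBall q.1 q.2))
      {p | 0 < p.2 ∧
        DifferentiableAt ℝ (fun q : E × ℝ => sInf (g '' Metric.closedBall q.1 q.2)) p} := by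
  have hrescale {p : E × ℝ} (hp : 0 < p.2) :
      (fun q : E × ℝ => sInf (g '' Metric.closedBall q.1 q.2)) =ᶠ[𝓝 p]
        fun q => sInf ((fun v => g (q.1 + q.2 • v)) '' Metric.closedBall 0 1) := by
    filter_upwards [continuous_snd.continuousAt.eventually (lt_mem_nhds hp)] with q hq
    rw [image_closedBall_eq_image_unitClosedBall g q.1 hq.le]
  refine ((continuousOn_fderiv_sInf_image_unitClosedBall hg).mono fun p hp => ?_).congr
    fun p hp => (hrescale hp.1).fderiv_eq
  exact (hrescale hp.1).differentiableAt_iff.1 hp.2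

end BallMinimum

lemma contDiff_one_of_hasGradientAt {F : Type*} [NormedAddCommGroup F] [InnerProductSpace ℝ F]
    [CompleteSpace F] {g : F → ℝ} {Dg : F → F} (hg : ∀ y, HasGradientAt g (Dg y) y)
    (hDg : Continuous Dg) : ContDiff ℝ 1 g :=
  contDiff_one_iff_hasFDerivAt.2 ⟨fun y => InnerProductSpace.toDual ℝ F (Dg y),
    (InnerProductSpace.toDual ℝ F).continuous.comp hDg, fun y => (hg y).hasFDerivAt⟩

lemma differentiableAt_of_notMem_SigmaSet {n : ℕ} {g : Euc n → ℝ} {p : Euc n × ℝ} (hp : 0 < p.2)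
    (hpS : p ∉ SigmaSet g) : DifferentiableAt ℝ (fun q : Euc n × ℝ => HLu g q.1 q.2) p :=
  not_not.1 fun h => hpS ⟨hp, h⟩

theorem C1_regularity_off_Sigma {n : ℕ} (hn : 0 < n) (g : Euc n → ℝ) (Dg : Euc n → Euc n)
    (hg : ∀ y, HasGradientAt g (Dg y) y) (hDg : Continuous Dg) :
    (∀ p ∈ {p : Euc n × ℝ | 0 < p.2} \ SigmaSet g,
      DifferentiableAt ℝ (fun q : Euc n × ℝ => HLu g q.1 q.2) p) ∧
    ContinuousOn (fun p => fderiv ℝ (fun q : Euc n × ℝ => HLu g q.1 q.2) p)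
      ({p : Euc n × ℝ | 0 < p.2} \ SigmaSet g) := by
  have hdiff : ∀ p ∈ {p : Euc n × ℝ | 0 < p.2} \ SigmaSet g,
      DifferentiableAt ℝ (fun q : Euc n × ℝ => HLu g q.1 q.2) p :=
    fun _ hp => differentiableAt_of_notMem_SigmaSet hp.1 hp.2
  exact ⟨hdiff, (C1_regularity_off_Sigma_general (contDiff_one_of_hasGradientAt hg hDg)).mono
    fun p hp => ⟨hp.1, hdiff p hp⟩⟩
end
end

section
/- Suppose g is twice continuously differentiable (C²). Then for every y₀ ∈ ℝⁿ with Dg(y₀) ≠ 0, the first termination time satisfies t̄ₛ(y₀) > 0; i.e., there exists t₀ > 0 such that for all t ∈ (0, t₀], y₀ is the unique minimizer for (X(y₀,t), t). -/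
open scoped InnerProductSpace Topology ENNReal
open Filter

noncomputable section

/-!
Let `p = Dg(y₀) ≠ 0`. A point `y` of the closed ball of radius `t` centred at `X(y₀,t)` satisfies
`‖p‖ ‖y - y₀‖² ≤ 2t ⟪p, y - y₀⟫`, because `y₀` lies on the boundary sphere with inner normal `p`.
Near `y₀` the C² function `g` is bounded below by `g y₀ + ⟪p, y - y₀⟫ - K ‖y - y₀‖²`, that is, `p`
is a proximal subgradient of `g` at `y₀`. As soon as `2tK < ‖p‖`, the linear term beats the
quadratic one on the ball, so `y₀` is the strict minimizer.
-/

section Taylor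

variable {𝕜 E F : Type*} [RCLike 𝕜] [NormedAddCommGroup E] [NormedSpace ℝ E] [NormedSpace 𝕜 E]
  [NormedAddCommGroup F] [NormedSpace 𝕜 F] {f : E → F} {x : E}

lemma isBigO_sub_sub_fderiv_of_isBigO_fderiv_sub (hf : ∀ᶠ y in 𝓝 x, DifferentiableAt 𝕜 f y)
    (hf' : (fun y ↦ fderiv 𝕜 f y - fderiv 𝕜 f x) =O[𝓝 x] fun y ↦ y - x) :
    (fun y ↦ f y - f x - fderiv 𝕜 f x (y - x)) =O[𝓝 x] fun y ↦ ‖y - x‖ ^ 2 := by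
  obtain ⟨K, hK, hbound⟩ := hf'.exists_nonneg
  obtain ⟨r, hr, hball⟩ := Metric.eventually_nhds_iff_ball.1 (hf.and hbound.bound)
  refine .of_bound K (Metric.eventually_nhds_iff_ball.2 ⟨r, hr, fun y hy ↦ ?_⟩)
  have hsub : Metric.closedBall x ‖y - x‖ ⊆ Metric.ball x r :=
    Metric.closedBall_subset_ball (mem_ball_iff_norm.1 hy)
  have hfderiv : ∀ z ∈ Metric.closedBall x ‖y - x‖,
      ‖fderiv 𝕜 f z - fderiv 𝕜 f x‖ ≤ K * ‖y - x‖ := fun z hz ↦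
    (hball z (hsub hz)).2.trans (by gcongr; exact mem_closedBall_iff_norm.1 hz)
  calc ‖f y - f x - fderiv 𝕜 f x (y - x)‖
      ≤ K * ‖y - x‖ * ‖y - x‖ :=
        (convex_closedBall x ‖y - x‖).norm_image_sub_le_of_norm_fderiv_le'
          (fun z hz ↦ (hball z (hsub hz)).1) hfderiv
          (Metric.mem_closedBall_self (norm_nonneg _)) (mem_closedBall_iff_norm.2 le_rfl)
    _ = K * ‖‖y - x‖ ^ 2‖ := by rw [norm_pow, norm_norm]; ring

lemma isBigO_sub_sub_fderiv_of_contDiffAt (hf : ContDiffAt 𝕜 2 f x) :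
    (fun y ↦ f y - f x - fderiv 𝕜 f x (y - x)) =O[𝓝 x] fun y ↦ ‖y - x‖ ^ 2 := by
  have hf' : DifferentiableAt 𝕜 (fderiv 𝕜 f) x :=
    (hf.fderiv_right (m := 1) (by norm_num)).differentiableAt one_ne_zero
  refine isBigO_sub_sub_fderiv_of_isBigO_fderiv_sub ?_ hf'.isBigO_sub
  exact (hf.eventually (by simp)).mono fun y hy ↦ hy.differentiableAt two_ne_zero

end Taylor

lemma norm_smul_inv_norm_smul {E : Type*} [NormedAddCommGroup E] [NormedSpace ℝ E] {p : E} {t : ℝ}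
    (hp : p ≠ 0) (ht : 0 ≤ t) : ‖t • (‖p‖⁻¹ • p)‖ = t := by
  rw [norm_smul, norm_smul, norm_inv, norm_norm, inv_mul_cancel₀ (norm_ne_zero_iff.2 hp), mul_one,
    Real.norm_of_nonneg ht]

section ProximalSubgradient

variable {E : Type*} [NormedAddCommGroup E] [InnerProductSpace ℝ E] {f : E → ℝ} {p x : E}

/-- `p` is a proximal subgradient of `f` at `x`: near `x`, the function `f` is bounded below by a
quadratic function with value `f x` and gradient `p` at `x`. It stands in for the gradient of a C²
function. The sign of `K` is left free, since enlarging `K` weakens the bound. -/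
def IsProximalSubgradientAt (f : E → ℝ) (p x : E) : Prop :=
  ∃ K : ℝ, ∀ᶠ y in 𝓝 x, f x + ⟪p, y - x⟫_ℝ - K * ‖y - x‖ ^ 2 ≤ f y

lemma isProximalSubgradientAt_of_contDiffAt [CompleteSpace E] (hf : ContDiffAt ℝ 2 f x)
    (hp : HasGradientAt f p x) : IsProximalSubgradientAt f p x := by
  obtain ⟨K, hK⟩ := (isBigO_sub_sub_fderiv_of_contDiffAt hf).bound
  refine ⟨K, hK.mono fun y hy ↦ ?_⟩
  rw [hp.hasFDerivAt.fderiv, InnerProductSpace.toDual_apply_apply, norm_pow, norm_norm,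
    Real.norm_eq_abs] at hy
  linarith [(abs_le.1 hy).1]

lemma mem_closedBall_add_norm_iff {v y : E} :
    y ∈ Metric.closedBall (x + v) ‖v‖ ↔ ‖y - x‖ ^ 2 ≤ 2 * ⟪v, y - x⟫_ℝ := by
  rw [mem_closedBall_iff_norm, ← sub_sub, ← sq_le_sq₀ (norm_nonneg _) (norm_nonneg _),
    norm_sub_sq_real, real_inner_comm]
  constructor <;> intro h <;> linarith

lemma mem_closedBall_add_smul_iff {t : ℝ} {y : E} (hp : p ≠ 0) (ht : 0 ≤ t) :
    y ∈ Metric.closedBall (x + t • (‖p‖⁻¹ • p)) t ↔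
      ‖p‖ * ‖y - x‖ ^ 2 ≤ 2 * t * ⟪p, y - x⟫_ℝ := by
  have hp_norm : 0 < ‖p‖ := norm_pos_iff.2 hp
  have hball := mem_closedBall_add_norm_iff (x := x) (v := t • (‖p‖⁻¹ • p)) (y := y)
  rw [norm_smul_inv_norm_smul hp ht, real_inner_smul_left, real_inner_smul_left] at hball
  rw [hball, ← mul_le_mul_iff_right₀ hp_norm]
  field_simp

lemma lt_of_mem_closedBall_of_quadratic_le {K t : ℝ} {y : E} (hp : p ≠ 0) (ht : 0 < t)
    (htK : 2 * t * K < ‖p‖) (hy : y ∈ Metric.closedBall (x + t • (‖p‖⁻¹ • p)) t) (hyx : y ≠ x)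
    (hf : f x + ⟪p, y - x⟫_ℝ - K * ‖y - x‖ ^ 2 ≤ f y) : f x < f y := by
  have hyx_norm : 0 < ‖y - x‖ := norm_sub_pos_iff.2 hyx
  have hlinear : K * ‖y - x‖ ^ 2 < ⟪p, y - x⟫_ℝ := by
    refine lt_of_mul_lt_mul_left ?_ (by positivity : 0 ≤ 2 * t)
    calc 2 * t * (K * ‖y - x‖ ^ 2) = 2 * t * K * ‖y - x‖ ^ 2 := by ring
      _ < ‖p‖ * ‖y - x‖ ^ 2 := by gcongr
      _ ≤ 2 * t * ⟪p, y - x⟫_ℝ := (mem_closedBall_add_smul_iff hp ht.le).1 hy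
  linarith

lemma eventually_forall_mem_closedBall_lt_s15 (hf : IsProximalSubgradientAt f p x) (hp : p ≠ 0) :
    ∀ᶠ t in 𝓝[>] (0 : ℝ), ∀ y ∈ Metric.closedBall (x + t • (‖p‖⁻¹ • p)) t, y ≠ x → f x < f y := by
  obtain ⟨K, hK⟩ := hf
  obtain ⟨r, hr, hquad⟩ := Metric.eventually_nhds_iff_ball.1 hK
  have htK : ∀ᶠ t in 𝓝[>] (0 : ℝ), 2 * t * K < ‖p‖ :=
    nhdsWithin_le_nhds <| ContinuousAt.eventually_lt (by fun_prop) (by fun_prop) (by simpa)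
  have htr : ∀ᶠ t in 𝓝[>] (0 : ℝ), t + t < r :=
    nhdsWithin_le_nhds <| ContinuousAt.eventually_lt (by fun_prop) (by fun_prop) (by simpa)
  filter_upwards [htK, htr, self_mem_nhdsWithin] with t htK htr ht y hy hyx
  have hy_ball : y ∈ Metric.ball x r := by
    rw [mem_ball_iff_norm]
    calc ‖y - x‖ ≤ ‖y - (x + t • (‖p‖⁻¹ • p))‖ + ‖t • (‖p‖⁻¹ • p)‖ := by
          simpa [dist_eq_norm] using dist_triangle y (x + t • (‖p‖⁻¹ • p)) x
      _ ≤ t + t := by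
          gcongr
          · exact mem_closedBall_iff_norm.1 hy
          · exact (norm_smul_inv_norm_smul hp (Set.mem_Ioi.1 ht).le).le
      _ < r := htr
  exact lt_of_mem_closedBall_of_quadratic_le hp ht htK hy hyx (hquad y hy_ball)

end ProximalSubgradient

section HopfLax

variable {n : ℕ} {g : Euc n → ℝ} {Dg : Euc n → Euc n} {x y₀ : Euc n} {t : ℝ}

lemma HLL_eq_singleton (hy₀ : y₀ ∈ Metric.closedBall x t)
    (hlt : ∀ y ∈ Metric.closedBall x t, y ≠ y₀ → g y₀ < g y) : HLL g x t = {y₀} := by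
  have hleast : IsLeast (g '' Metric.closedBall x t) (g y₀) := by
    refine ⟨Set.mem_image_of_mem g hy₀, Set.forall_mem_image.2 fun y hy ↦ ?_⟩
    obtain rfl | hne := eq_or_ne y y₀
    · exact le_rfl
    · exact (hlt y hy hne).le
  have hu : HLu g x t = g y₀ := hleast.csInf_eq
  refine Set.eq_singleton_iff_unique_mem.2 ⟨⟨mem_closedBall_iff_norm.1 hy₀, hu.symm⟩, ?_⟩
  rintro y ⟨hy, hgy⟩
  by_contra hne
  exact (hlt y (mem_closedBall_iff_norm.2 hy) hne).ne (hgy.trans hu).symm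

lemma tbar_pos_iff : 0 < tbar g Dg y₀ ↔ ∃ t, 0 < t ∧ HLL g (charX Dg y₀ t) t = {y₀} := by
  simp only [tbar, lt_sSup_iff, Set.exists_mem_image, ENNReal.ofReal_pos, Set.mem_ofPred_eq,
    and_right_comm, and_self]

lemma eventually_HLL_charX_eq_singleton (hg : IsProximalSubgradientAt g (Dg y₀) y₀)
    (hy : Dg y₀ ≠ 0) : ∀ᶠ t in 𝓝[>] (0 : ℝ), HLL g (charX Dg y₀ t) t = {y₀} := by
  filter_upwards [eventually_forall_mem_closedBall_lt_s15 hg hy, self_mem_nhdsWithin] with t hlt ht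
  refine HLL_eq_singleton ?_ hlt
  exact (mem_closedBall_add_smul_iff hy (Set.mem_Ioi.1 ht).le).2 (by simp)

theorem tbar_pos_of_C2_general (hg : IsProximalSubgradientAt g (Dg y₀) y₀) (hy : Dg y₀ ≠ 0) :
    0 < tbar g Dg y₀ ∧
      ∃ t₀ : ℝ, 0 < t₀ ∧ ∀ t : ℝ, 0 < t → t ≤ t₀ → HLL g (charX Dg y₀ t) t = {y₀} := by
  obtain ⟨t₀, ht₀, hunique⟩ :=
    mem_nhdsGT_iff_exists_Ioc_subset.1 (eventually_HLL_charX_eq_singleton hg hy)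
  exact ⟨tbar_pos_iff.2 ⟨t₀, ht₀, hunique ⟨ht₀, le_rfl⟩⟩, t₀, ht₀, fun t ht htt₀ ↦
    hunique ⟨ht, htt₀⟩⟩

end HopfLax

theorem tbar_pos_of_C2 {n : ℕ} (hn : 0 < n) (g : Euc n → ℝ) (Dg : Euc n → Euc n)
    (hg2 : ContDiff ℝ 2 g) (hg : ∀ y, HasGradientAt g (Dg y) y)
    (y₀ : Euc n) (hy : Dg y₀ ≠ 0) :
    0 < tbar g Dg y₀ ∧
      ∃ t₀ : ℝ, 0 < t₀ ∧ ∀ t : ℝ, 0 < t → t ≤ t₀ → HLL g (charX Dg y₀ t) t = {y₀} :=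
  tbar_pos_of_C2_general (isProximalSubgradientAt_of_contDiffAt hg2.contDiffAt (hg y₀)) hy
end
end
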